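/- arXiv:2305.00153 — 10 statements merged into one kernel-verified Lean document; each statement's English description precedes it below -/
import Mathlib

section
/- Let z ∈ ℂ^{n+1} be such that z and z̄ are linearly independent over ℂ and f(z) ≤ 0 (equivalently, the restriction of the Hermitian form to span_ℂ{z,z̄} is elliptic or parabolic, i.e. positive semidefinite). Then ⟨z,z⟩ > 0, i.e. z is a positive vector. -/
open scoped ComplexConjugate

noncomputable def herm (n : ℕ) (z w : Fin (n + 1) → ℂ) : ℂ :=
  (∑ j : Fin n, z j.castSucc * conj (w j.castSucc)) - z (Fin.last n) * conj (w (Fin.last n))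

def conjVec (n : ℕ) (z : Fin (n + 1) → ℂ) : Fin (n + 1) → ℂ := fun j => conj (z j)

noncomputable def fdet (n : ℕ) (z : Fin (n + 1) → ℂ) : ℝ :=
  Complex.normSq (herm n z (conjVec n z)) - ((herm n z z).re) ^ 2

def IsRealVec (n : ℕ) (z : Fin (n + 1) → ℂ) : Prop := conjVec n z = z

def Scone (n : ℕ) : Set (Fin (n + 1) → ℂ) :=
  {w | w ≠ 0 ∧ IsRealVec n w ∧ herm n w w = 0}

def LambdaCone (n : ℕ) : Set (Fin (n + 1) → ℂ) :=
  {z | z ≠ 0 ∧ ∃ w ∈ Scone n, herm n z w = 0}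

theorem quad_nonpos_aux (A B C a b : ℝ) (h : C ^ 2 ≤ A * B) (hs : A + B ≤ 0) :
    b ^ 2 * A - 2 * a * b * C + a ^ 2 * B ≤ 0 := by
  have hA : A ≤ 0 := by
    by_contra hA
    push Not at hA
    nlinarith [sq_nonneg C, mul_pos hA hA]
  have hB : B ≤ 0 := by
    by_contra hB
    push Not at hB
    nlinarith [sq_nonneg C, mul_pos hB hB]
  rcases hA.lt_or_eq with hA | hA
  · by_contra hQ
    push Not at hQ
    have h1 := mul_neg_of_neg_of_pos hA hQ
    have h2 : 0 ≤ a ^ 2 * (A * B - C ^ 2) := mul_nonneg (sq_nonneg a) (by linarith)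
    nlinarith [sq_nonneg (b * A - a * C)]
  · subst hA
    have hC : C = 0 := by
      have : C ^ 2 = 0 := le_antisymm (by linarith) (sq_nonneg C)
      simpa using this
    subst hC
    nlinarith [mul_nonneg (sq_nonneg a) (neg_nonneg.2 hB)]

/-- (Corollary 3.7): If `z` and `z̄` are linearly independent and `f(z) ≤ 0` (the plane
`span {z, z̄}` is elliptic or parabolic), then `z` is a positive vector. -/
theorem pos_of_fdet_nonpos (n : ℕ) (hn : 2 ≤ n) (z : Fin (n + 1) → ℂ)
    (hind : LinearIndependent ℂ ![z, conjVec n z]) (hf : fdet n z ≤ 0) :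
    0 < (herm n z z).re := by
  by_contra hneg
  push Not at hneg
  obtain ⟨a, ha⟩ : ∃ a, a = (z (Fin.last n)).re := ⟨_, rfl⟩
  obtain ⟨b, hb⟩ : ∃ b, b = (z (Fin.last n)).im := ⟨_, rfl⟩
  obtain ⟨X, hX⟩ : ∃ X, X = ∑ j : Fin n, (z j.castSucc).re ^ 2 := ⟨_, rfl⟩
  obtain ⟨Y, hY⟩ : ∃ Y, Y = ∑ j : Fin n, (z j.castSucc).im ^ 2 := ⟨_, rfl⟩
  obtain ⟨P, hP⟩ : ∃ P, P = ∑ j : Fin n, (z j.castSucc).re * (z j.castSucc).im := ⟨_, rfl⟩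
  have e1 : (herm n z z).re = (X - a ^ 2) + (Y - b ^ 2) := by
    have : X + Y = ∑ j : Fin n, ((z j.castSucc).re ^ 2 + (z j.castSucc).im ^ 2) := by
      rw [hX, hY, Finset.sum_add_distrib]
    have h2 : (herm n z z).re =
        ∑ j : Fin n, ((z j.castSucc).re ^ 2 + (z j.castSucc).im ^ 2) - (a ^ 2 + b ^ 2) := by
      simp [herm, ha, hb, pow_two]
    linarith
  have e2 : (herm n z (conjVec n z)).re = (X - a ^ 2) - (Y - b ^ 2) := by
    have : X - Y = ∑ j : Fin n, ((z j.castSucc).re ^ 2 - (z j.castSucc).im ^ 2) := by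
      rw [hX, hY, Finset.sum_sub_distrib]
    have h2 : (herm n z (conjVec n z)).re =
        ∑ j : Fin n, ((z j.castSucc).re ^ 2 - (z j.castSucc).im ^ 2) - (a ^ 2 - b ^ 2) := by
      simp [herm, conjVec, ha, hb, pow_two]
    linarith
  have e3 : (herm n z (conjVec n z)).im = 2 * (P - a * b) := by
    have : 2 * P = ∑ j : Fin n, ((z j.castSucc).re * (z j.castSucc).im
        + (z j.castSucc).im * (z j.castSucc).re) := by
      rw [hP, Finset.mul_sum]
      exact Finset.sum_congr rfl fun j _ => by ring
    have h2 : (herm n z (conjVec n z)).im =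
        ∑ j : Fin n, ((z j.castSucc).re * (z j.castSucc).im
          + (z j.castSucc).im * (z j.castSucc).re) - (a * b + b * a) := by
      simp [herm, conjVec, ha, hb]
    linarith
  rw [fdet, Complex.normSq_apply, e1, e2, e3] at hf
  rw [e1] at hneg
  have hq := quad_nonpos_aux (X - a ^ 2) (Y - b ^ 2) (P - a * b) a b (by nlinarith) hneg
  have hsum : ∑ j : Fin n, (b * (z j.castSucc).re - a * (z j.castSucc).im) ^ 2
      = b ^ 2 * X - 2 * a * b * P + a ^ 2 * Y := by
    rw [hX, hY, hP, Finset.mul_sum, Finset.mul_sum, Finset.mul_sum, ← Finset.sum_sub_distrib,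
      ← Finset.sum_add_distrib]
    exact Finset.sum_congr rfl fun j _ => by ring
  have hz : ∑ j : Fin n, (b * (z j.castSucc).re - a * (z j.castSucc).im) ^ 2 = 0 :=
    le_antisymm (by rw [hsum]; nlinarith) (Finset.sum_nonneg fun j _ => sq_nonneg _)
  rw [Finset.sum_eq_zero_iff_of_nonneg (fun j _ => sq_nonneg _)] at hz
  have hw : ∀ j, b * (z j).re - a * (z j).im = 0 := by
    intro j
    refine Fin.lastCases ?_ (fun j => ?_) j
    · rw [← ha, ← hb]; ring
    · exact pow_eq_zero_iff two_ne_zero |>.1 (hz j (Finset.mem_univ j))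
  have hl : z (Fin.last n) = 0 := by
    have := (LinearIndependent.pair_iff.1 hind (conj (z (Fin.last n))) (-(z (Fin.last n))) (by
      funext j
      have hj := hw j
      apply Complex.ext
      · simp [conjVec, ← ha, ← hb]
        try linarith
      · simp [conjVec, ← ha, ← hb]
        linarith)).2
    simpa using this
  have ha0 : a = 0 := by rw [ha, hl]; rfl
  have hb0 : b = 0 := by rw [hb, hl]; rfl
  subst ha0 hb0
  have hX0 : 0 ≤ X := hX ▸ Finset.sum_nonneg fun j _ => sq_nonneg _
  have hY0 : 0 ≤ Y := hY ▸ Finset.sum_nonneg fun j _ => sq_nonneg _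
  have hX1 : X = 0 := by linarith
  have hY1 : Y = 0 := by linarith
  rw [hX1, eq_comm, Finset.sum_eq_zero_iff_of_nonneg (fun j _ => sq_nonneg _)] at hX
  rw [hY1, eq_comm, Finset.sum_eq_zero_iff_of_nonneg (fun j _ => sq_nonneg _)] at hY
  apply hind.ne_zero 0
  show z = 0
  funext j
  refine Fin.lastCases hl (fun j => ?_) j
  apply Complex.ext
  · exact pow_eq_zero_iff two_ne_zero |>.1 (hX j (Finset.mem_univ j))
  · exact pow_eq_zero_iff two_ne_zero |>.1 (hY j (Finset.mem_univ j))
end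

section
/- Let n > 2 and let z ∈ ℂ^{n+1} be such that z and z̄ are linearly independent over ℂ. Then z ∈ Λ̃ (i.e. there exists a real null vector w ∈ S with ⟨z,w⟩ = 0) if and only if f(z) ≤ 0. -/
open scoped ComplexConjugate

section aux
open Module
variable {E : Type*} [NormedAddCommGroup E] [InnerProductSpace ℝ E]

lemma aux_forward (x y w : E) (a c ω : ℝ) (hω : ω ≠ 0) (hw : inner ℝ w w = ω ^ 2)
    (hx : inner ℝ x w = a * ω) (hy : inner ℝ y w = c * ω) :
    (inner ℝ x y - a * c) ^ 2 ≤ (inner ℝ x x - a ^ 2) * (inner ℝ y y - c ^ 2) := by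
  have hG := real_inner_mul_inner_self_le x y
  obtain ⟨X, hX⟩ : ∃ X, inner ℝ x x = X := ⟨_, rfl⟩
  obtain ⟨Y, hY⟩ : ∃ Y, inner ℝ y y = Y := ⟨_, rfl⟩
  obtain ⟨B, hB⟩ : ∃ B, inner ℝ x y = B := ⟨_, rfl⟩
  have hB' : inner ℝ y x = B := by rw [real_inner_comm]; exact hB
  have hC := real_inner_mul_inner_self_le w
    ((a * Y - c * B) • x - (a * B - c * X) • y)
  have hN := real_inner_self_nonneg (x := a • y - c • x)
  simp only [inner_sub_left, inner_sub_right, inner_smul_left, inner_smul_right,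
    real_inner_comm x w, real_inner_comm y w, hX, hY, hB, hB', hx, hy, hw, conj_trivial] at hC hN hG ⊢
  set N := a ^ 2 * Y - 2 * a * c * B + c ^ 2 * X with hNdef
  have h1 : ω ^ 2 * (N * N) ≤ ω ^ 2 * ((X * Y - B * B) * N) := by
    rw [hNdef]; nlinarith [hC]
  have h2 : N * N ≤ (X * Y - B * B) * N := le_of_mul_le_mul_left h1 (by positivity)
  have h3 : 0 ≤ N := by rw [hNdef]; nlinarith [hN]
  have h4 : N ≤ X * Y - B * B := by
    rcases h3.eq_or_lt with h | h
    · rw [← h]; linarith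
    · exact le_of_mul_le_mul_right h2 h
  rw [hNdef] at h4
  nlinarith [h4]

lemma aux_backward [FiniteDimensional ℝ E] (hE : 2 < finrank ℝ E) (x y : E) (a c : ℝ)
    (hind : ∀ s t : ℝ, s • x + t • y = 0 → s * a + t * c = 0 → s = 0 ∧ t = 0)
    (h : (inner ℝ x y - a * c) ^ 2 ≤ (inner ℝ x x - a ^ 2) * (inner ℝ y y - c ^ 2)) :
    ∃ w : E, inner ℝ w w = (1 : ℝ) ∧ inner ℝ x w = a ∧ inner ℝ y w = c := by
  have hG := real_inner_mul_inner_self_le x y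
  obtain ⟨X, hX⟩ : ∃ X, inner ℝ x x = X := ⟨_, rfl⟩
  obtain ⟨Y, hY⟩ : ∃ Y, inner ℝ y y = Y := ⟨_, rfl⟩
  obtain ⟨B, hB⟩ : ∃ B, inner ℝ x y = B := ⟨_, rfl⟩
  have hB' : inner ℝ y x = B := by rw [real_inner_comm]; exact hB
  rw [hX, hY, hB] at hG
  rw [hX, hY, hB] at h
  have hGpos : 0 < X * Y - B * B := by
    rcases (sub_nonneg.2 hG).eq_or_lt with h0 | h0
    · exfalso
      have hv : (-c) • x + a • y = 0 := by
        rw [← inner_self_eq_zero (𝕜 := ℝ)]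
        refine le_antisymm ?_ real_inner_self_nonneg
        simp only [inner_add_left, inner_add_right, inner_smul_left, inner_smul_right,
          hX, hY, hB, hB', conj_trivial]
        nlinarith
      obtain ⟨hc, ha⟩ := hind _ _ hv (by ring)
      have hv2 : (-B) • x + X • y = 0 := by
        rw [← inner_self_eq_zero (𝕜 := ℝ)]
        refine le_antisymm ?_ real_inner_self_nonneg
        simp only [inner_add_left, inner_add_right, inner_smul_left, inner_smul_right,
          hX, hY, hB, hB', conj_trivial]
        have : X * (X * Y - B * B) = 0 := by rw [← h0]; ring
        nlinarith
      have hc' : c = 0 := by linarith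
      obtain ⟨_, hX0⟩ := hind _ _ hv2 (by rw [ha, hc']; ring)
      have hx0 : x = 0 := by rw [← inner_self_eq_zero (𝕜 := ℝ), hX, hX0]
      have := (hind 1 0 (by simp [hx0]) (by simp [ha])).1
      exact one_ne_zero this
    · exact h0
  set G := X * Y - B * B with hGdef
  obtain ⟨u, hu1, hux, huy⟩ : ∃ u : E, inner ℝ u u = (1 : ℝ) ∧ inner ℝ x u = (0 : ℝ) ∧
      inner ℝ y u = (0 : ℝ) := by
    let K := Submodule.span ℝ ({x, y} : Set E)
    have hK : finrank ℝ K ≤ 2 := by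
      classical
      have h1 := finrank_span_finset_le_card (R := ℝ) ({x, y} : Finset E)
      have h2 : ({x, y} : Finset E).card ≤ 2 := Finset.card_le_two
      have h3 := h1.trans h2
      rw [Finset.coe_insert, Finset.coe_singleton] at h3
      exact h3
    have hs := K.finrank_add_finrank_orthogonal
    have hpos : 0 < finrank ℝ Kᗮ := by omega
    have hne : Kᗮ ≠ ⊥ := by
      intro hb; rw [hb] at hpos; simp at hpos
    obtain ⟨v, hv, hv0⟩ := Submodule.exists_mem_ne_zero_of_ne_bot hne
    have hn : ‖v‖ ≠ 0 := norm_ne_zero_iff.2 hv0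
    rw [Submodule.mem_orthogonal] at hv
    refine ⟨‖v‖⁻¹ • v, ?_, ?_, ?_⟩
    · rw [inner_smul_left, inner_smul_right, real_inner_self_eq_norm_sq]
      simp only [conj_trivial]; field_simp
    · rw [inner_smul_right, hv x (Submodule.subset_span (by simp))]; simp
    · rw [inner_smul_right, hv y (Submodule.subset_span (by simp))]; simp
  have hux' : inner ℝ u x = (0 : ℝ) := by rw [real_inner_comm]; exact hux
  have huy' : inner ℝ u y = (0 : ℝ) := by rw [real_inner_comm]; exact huy
  set P := (a ^ 2 * Y - 2 * a * c * B + c ^ 2 * X) / G with hP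
  have hP1 : P ≤ 1 := by
    rw [hP, div_le_one hGpos, hGdef]; nlinarith
  have hr : √(1 - P) * √(1 - P) = 1 - P := Real.mul_self_sqrt (by linarith)
  refine ⟨((a * Y - c * B) / G) • x + ((c * X - a * B) / G) • y + √(1 - P) • u, ?_, ?_, ?_⟩
  · simp only [inner_add_left, inner_add_right, inner_smul_left, inner_smul_right,
      hX, hY, hB, hB', hux, huy, hux', huy', hu1, conj_trivial]
    have : √(1 - P) * (√(1 - P) * 1) = 1 - P := by rw [mul_one, hr]
    simp only [mul_zero, zero_add, add_zero]
    rw [this, hP]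
    have hG0 := hGpos.ne'
    field_simp
    rw [hGdef]; ring
  · simp only [inner_add_right, inner_smul_right, hX, hB, hux]
    have hG0 := hGpos.ne'
    field_simp
    rw [hGdef]; ring
  · simp only [inner_add_right, inner_smul_right, hY, hB', huy]
    have hG0 := hGpos.ne'
    field_simp
    rw [hGdef]; ring

lemma eu_inner {n : ℕ} (u v : EuclideanSpace ℝ (Fin n)) :
    inner ℝ u v = ∑ i, u i * v i := by
  simp [PiLp.inner_apply, mul_comm]

end aux

theorem mem_lambdaCone_iff_fdet_nonpos (n : ℕ) (hn : 2 < n) (z : Fin (n + 1) → ℂ)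
    (hind : LinearIndependent ℂ ![z, conjVec n z]) :
    z ∈ LambdaCone n ↔ fdet n z ≤ 0 := by
  rw [LinearIndependent.pair_iff] at hind
  have hz0 : z ≠ 0 := by
    rintro rfl
    have := (hind 1 0 (by simp)).1
    exact one_ne_zero this
  let x : EuclideanSpace ℝ (Fin n) := WithLp.toLp 2 fun j => (z j.castSucc).re
  let y : EuclideanSpace ℝ (Fin n) := WithLp.toLp 2 fun j => (z j.castSucc).im
  obtain ⟨a, ha⟩ : ∃ a, (z (Fin.last n)).re = a := ⟨_, rfl⟩
  obtain ⟨c, hc⟩ : ∃ c, (z (Fin.last n)).im = c := ⟨_, rfl⟩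
  have hR : ∀ s t : ℝ, s • x + t • y = 0 → s * a + t * c = 0 → s = 0 ∧ t = 0 := by
    intro s t h1 h2
    have h := hind ⟨s, -t⟩ ⟨s, t⟩ (by
      have key : ∀ j, s * (z j).re + t * (z j).im = 0 := by
        intro j
        refine Fin.lastCases ?_ (fun i => ?_) j
        · rw [ha, hc]; exact h2
        · have := congrArg (fun v : EuclideanSpace ℝ (Fin n) => v i) h1
          simpa [x, y] using this
      funext j
      have := key j
      apply Complex.ext
      · simp [conjVec]; linarith
      · simp [conjVec]; ring)
    exact ⟨congrArg Complex.re h.2, congrArg Complex.im h.2⟩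
  have hf : fdet n z = 4 * ((inner ℝ x y - a * c) ^ 2
      - (inner ℝ x x - a ^ 2) * (inner ℝ y y - c ^ 2)) := by
    have e1 : herm n z (conjVec n z) = ⟨(inner ℝ x x - a ^ 2) - (inner ℝ y y - c ^ 2),
        2 * (inner ℝ x y - a * c)⟩ := by
      apply Complex.ext
      · simp only [eu_inner]
        simp [herm, conjVec, x, y, ha, hc, Finset.sum_sub_distrib]; ring
      · simp only [eu_inner]
        simp [herm, conjVec, x, y, ha, hc, Finset.sum_add_distrib, mul_comm]; ring
    have e2 : (herm n z z).re = (inner ℝ x x - a ^ 2) + (inner ℝ y y - c ^ 2) := by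
      simp only [eu_inner]
      simp [herm, x, y, ha, hc, Finset.sum_add_distrib]; ring
    rw [fdet, e1, e2, Complex.normSq_mk]; ring
  rw [hf]
  constructor
  · rintro ⟨-, w, ⟨hw0, hwr, hww⟩, hzw⟩
    have him : ∀ j, (w j).im = 0 := fun j => Complex.conj_eq_iff_im.1 (congrFun hwr j)
    let w' : EuclideanSpace ℝ (Fin n) := WithLp.toLp 2 fun j => (w j.castSucc).re
    have h1 := congrArg Complex.re hww
    have h2 := congrArg Complex.re hzw
    have h3 := congrArg Complex.im hzw
    have g1 : inner ℝ w' w' = (w (Fin.last n)).re ^ 2 := by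
      simp [herm, him] at h1
      rw [eu_inner]
      simp [w', eu_inner]; linarith
    have g2 : inner ℝ x w' = a * (w (Fin.last n)).re := by
      simp [herm, him, ha, hc] at h2
      simp [x, w', eu_inner, mul_comm] at h2 ⊢; linarith
    have g3 : inner ℝ y w' = c * (w (Fin.last n)).re := by
      simp [herm, him, ha, hc] at h3
      simp [y, w', eu_inner, mul_comm] at h3 ⊢; linarith
    have hω : (w (Fin.last n)).re ≠ 0 := by
      intro h0
      apply hw0
      rw [h0, zero_pow two_ne_zero, inner_self_eq_zero] at g1
      funext j
      refine Fin.lastCases ?_ (fun i => ?_) j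
      · exact Complex.ext h0 (him _)
      · refine Complex.ext ?_ (him _)
        have := congrArg (fun v : EuclideanSpace ℝ (Fin n) => v i) g1
        simpa [w'] using this
    have := aux_forward x y w' a c _ hω g1 g2 g3
    linarith
  · intro h
    obtain ⟨w, h1, h2, h3⟩ := aux_backward (by simpa using hn) x y a c hR (by linarith)
    refine ⟨hz0, Fin.snoc (α := fun _ => ℂ) (fun j => (w j : ℂ)) 1, ⟨?_, ?_, ?_⟩, ?_⟩
    · intro h0
      have := congrFun h0 (Fin.last n)
      simp at this
    · funext j
      refine Fin.lastCases ?_ (fun i => ?_) j <;> simp [conjVec]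
    · rw [eu_inner] at h1
      apply Complex.ext
      · simp [herm]; linarith
      · simp [herm]
    · simp [eu_inner, x, y, mul_comm] at h2 h3
      apply Complex.ext
      · simp [herm, ha, mul_comm]; linarith
      · simp [herm, hc, mul_comm]; linarith
end

section
/- Let z ∈ ℂ^{n+1} \ {0} be such that z and z̄ are linearly dependent over ℂ. Then z ∈ Λ̃ (i.e. there exists a real null vector w ∈ S with ⟨z,w⟩ = 0) if and only if ⟨z,z⟩ ≥ 0. -/
open scoped ComplexConjugate

lemma exists_perp (n : ℕ) (hn : 2 ≤ n) (x : Fin n → ℝ) :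
    ∃ y : Fin n → ℝ, ∑ j, x j * y j = 0 ∧ ∑ j, y j ^ 2 = 1 := by
  obtain ⟨m, rfl⟩ := Nat.exists_eq_add_of_le' hn
  have key : ∃ p q : ℝ, x 0 * p + x 1 * q = 0 ∧ p ^ 2 + q ^ 2 = 1 := by
    by_cases h : x 0 ^ 2 + x 1 ^ 2 = 0
    · refine ⟨1, 0, ?_, by norm_num⟩
      have : x 0 = 0 := by nlinarith [sq_nonneg (x 0), sq_nonneg (x 1)]
      simp [this]
    · have hp : 0 < x 0 ^ 2 + x 1 ^ 2 := lt_of_le_of_ne (by positivity) (Ne.symm h)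
      refine ⟨x 1 / √(x 0 ^ 2 + x 1 ^ 2), - x 0 / √(x 0 ^ 2 + x 1 ^ 2), by ring, ?_⟩
      rw [div_pow, div_pow, Real.sq_sqrt hp.le, ← add_div, div_eq_one_iff_eq h]
      ring
  obtain ⟨p, q, h1, h2⟩ := key
  refine ⟨Fin.cons p (Fin.cons q 0), ?_, ?_⟩
  · simp [Fin.sum_univ_succ]
    simpa using h1
  · simp [Fin.sum_univ_succ, h2]

lemma real_claim (n : ℕ) (hn : 2 ≤ n) (x : Fin n → ℝ) (t : ℝ) :
    (∃ (u : Fin n → ℝ) (s : ℝ), s ≠ 0 ∧ ∑ j, u j ^ 2 = s ^ 2 ∧ ∑ j, x j * u j = t * s) ↔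
      t ^ 2 ≤ ∑ j, x j ^ 2 := by
  constructor
  · rintro ⟨u, s, hs, h1, h2⟩
    have h := Finset.sum_mul_sq_le_sq_mul_sq Finset.univ x u
    rw [h1, h2, mul_pow] at h
    exact le_of_mul_le_mul_right h (by positivity)
  · intro h
    obtain ⟨y, hy1, hy2⟩ := exists_perp n hn x
    by_cases hA : ∑ j, x j ^ 2 = 0
    · have ht : t = 0 := by
        rw [hA] at h
        nlinarith [sq_nonneg t]
      exact ⟨y, 1, one_ne_zero, by simpa using hy2, by simpa [ht] using hy1⟩
    · set A := ∑ j, x j ^ 2 with hAd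
      have hA0 : 0 ≤ A := Finset.sum_nonneg fun j _ => sq_nonneg _
      have hb : √(A * (A - t ^ 2)) ^ 2 = A * (A - t ^ 2) :=
        Real.sq_sqrt (mul_nonneg hA0 (by linarith))
      set b := √(A * (A - t ^ 2))
      refine ⟨fun j => t * x j + b * y j, A, hA, ?_, ?_⟩
      · have : ∑ j, (t * x j + b * y j) ^ 2
            = t ^ 2 * A + 2 * t * b * ∑ j, x j * y j + b ^ 2 * ∑ j, y j ^ 2 := by
          rw [hAd, Finset.mul_sum, Finset.mul_sum, Finset.mul_sum, ← Finset.sum_add_distrib,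
            ← Finset.sum_add_distrib]
          exact Finset.sum_congr rfl fun j _ => by ring
        rw [this, hy1, hy2, hb]
        ring
      · have : ∑ j, x j * (t * x j + b * y j) = t * A + b * ∑ j, x j * y j := by
          rw [hAd, Finset.mul_sum, Finset.mul_sum, ← Finset.sum_add_distrib]
          exact Finset.sum_congr rfl fun j _ => by ring
        rw [this, hy1]
        ring

lemma herm_real (n : ℕ) (c d : ℂ) (x u : Fin (n + 1) → ℝ) :
    herm n (fun j => c * (x j : ℂ)) (fun j => d * (u j : ℂ)) = c * conj d *
      (((∑ j : Fin n, x j.castSucc * u j.castSucc) - x (Fin.last n) * u (Fin.last n) : ℝ) : ℂ) := by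
  unfold herm
  push_cast
  rw [mul_sub, Finset.mul_sum]
  congr 1
  · refine Finset.sum_congr rfl fun j _ => ?_
    rw [map_mul, Complex.conj_ofReal]
    ring
  · rw [map_mul, Complex.conj_ofReal]
    ring

lemma exists_real_form (n : ℕ) (z : Fin (n + 1) → ℂ) (hz : z ≠ 0)
    (hdep : ¬ LinearIndependent ℂ ![z, conjVec n z]) :
    ∃ (c : ℂ) (x : Fin (n + 1) → ℝ), c ≠ 0 ∧ z = fun j => c * (x j : ℂ) := by
  rw [LinearIndependent.pair_iff' hz] at hdep
  push Not at hdep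
  obtain ⟨a, ha⟩ := hdep
  obtain ⟨k, hk⟩ := Function.ne_iff.mp hz
  have hk : z k ≠ 0 := hk
  have ha' : ∀ j, conj (z j) = a * z j := fun j => (congrFun ha j).symm
  have ha0 : a ≠ 0 := by
    rintro rfl
    have := ha' k
    simp at this
    exact hk this
  refine ⟨z k, fun j => (z j / z k).re, hk, ?_⟩
  funext j
  have : conj (z j / z k) = z j / z k := by
    rw [map_div₀, ha', ha', mul_div_mul_left _ _ ha0]
  rw [Complex.conj_eq_iff_re.mp this]
  field_simp

/-- (Lemma 3.10 / `le:6`): For nonzero `z` with `z` and `z̄` linearly dependent,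
`z` lies in the cone over `Λ` iff `⟨z,z⟩ ≥ 0`. -/
theorem mem_lambdaCone_iff_nonneg (n : ℕ) (hn : 2 ≤ n) (z : Fin (n + 1) → ℂ) (hz : z ≠ 0)
    (hdep : ¬ LinearIndependent ℂ ![z, conjVec n z]) :
    z ∈ LambdaCone n ↔ 0 ≤ (herm n z z).re := by
  obtain ⟨c, x, hc, rfl⟩ := exists_real_form n z hz hdep
  have hR : 0 ≤ (herm n (fun j => c * (x j : ℂ)) (fun j => c * (x j : ℂ))).re ↔
      x (Fin.last n) ^ 2 ≤ ∑ j : Fin n, x j.castSucc ^ 2 := by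
    rw [herm_real, Complex.mul_conj, ← Complex.ofReal_mul, Complex.ofReal_re,
      mul_nonneg_iff_of_pos_left (Complex.normSq_pos.mpr hc), sub_nonneg]
    simp only [sq]
  rw [hR, ← real_claim n hn]
  constructor
  · rintro ⟨_, w, ⟨hw0, hwr, hww⟩, hzw⟩
    obtain ⟨v, rfl⟩ : ∃ v : Fin (n + 1) → ℝ, w = fun j => (1 : ℂ) * (v j : ℂ) := by
      refine ⟨fun j => (w j).re, ?_⟩
      funext j
      rw [one_mul]
      exact (Complex.conj_eq_iff_re.mp (congrFun hwr j)).symm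
    rw [herm_real] at hww hzw
    simp only [map_one, mul_one, one_mul, mul_eq_zero, hc, false_or, Complex.ofReal_eq_zero] at hww hzw
    have h1 : ∑ j : Fin n, v j.castSucc ^ 2 = v (Fin.last n) ^ 2 := by
      simp only [sq]
      linarith
    refine ⟨fun j => v j.castSucc, v (Fin.last n), ?_, h1, by linarith⟩
    intro h0
    apply hw0
    rw [h0, zero_pow two_ne_zero, Finset.sum_eq_zero_iff_of_nonneg (fun j _ => sq_nonneg _)] at h1
    funext j
    refine Fin.lastCases ?_ (fun i => ?_) j
    · simp [h0]
    · have := h1 i (Finset.mem_univ _)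
      simpa using this
  · rintro ⟨u, s, hs, h1, h2⟩
    refine ⟨hz, fun j => (1 : ℂ) * ((Fin.snoc u s : Fin (n + 1) → ℝ) j : ℂ), ⟨?_, ?_, ?_⟩, ?_⟩
    · intro h
      have := congrFun h (Fin.last n)
      simp [hs] at this
    · funext j
      simp [conjVec]
    · rw [herm_real]
      simp only [Fin.snoc_castSucc, Fin.snoc_last, ← sq, h1, sub_self, Complex.ofReal_zero, mul_zero]
    · rw [herm_real]
      simp only [Fin.snoc_castSucc, Fin.snoc_last, h2, sub_self, Complex.ofReal_zero, mul_zero]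
end

section
/- Let n > 2. Then Λ̃ = {z ∈ ℂ^{n+1} \ {0} : ⟨z,z⟩ ≥ 0 and f(z) ≤ 0}; in particular Λ̃ is (the cone over) a real semi-algebraic set, described by one polynomial inequality of degree 2 and one of degree 4 in the real and imaginary parts of the coordinates. Moreover Λ̃ has nonempty interior in ℂ^{n+1}. -/
open scoped ComplexConjugate

section Aux

/-- The Gram condition. -/
lemma gram_iff (A B C : ℝ) :
    (0 ≤ A + C ∧ B ^ 2 ≤ A * C) ↔ ∀ l m : ℝ, 0 ≤ l ^ 2 * A + 2 * l * m * B + m ^ 2 * C := by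
  constructor
  · rintro ⟨h1, h2⟩ l m
    have hA : 0 ≤ A := by
      by_contra h
      push Not at h
      nlinarith [sq_nonneg B]
    have hC : 0 ≤ C := by
      by_contra h
      push Not at h
      nlinarith [sq_nonneg B]
    rcases hA.eq_or_lt with h | h
    · subst h
      have : B = 0 := by
        have : B ^ 2 = 0 := le_antisymm (by linarith) (sq_nonneg B)
        simpa using this
      subst this
      have := mul_nonneg (sq_nonneg m) hC
      linarith
    · have : 0 ≤ A * (l ^ 2 * A + 2 * l * m * B + m ^ 2 * C) := by
        nlinarith [sq_nonneg (l * A + m * B), mul_nonneg (sq_nonneg m) (sub_nonneg.2 h2)]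
      exact nonneg_of_mul_nonneg_right this h
  · intro h
    have hA := h 1 0
    have hC := h 0 1
    norm_num at hA hC
    refine ⟨by linarith, ?_⟩
    by_contra hlt
    push Not at hlt
    have h1 := h B (-A)
    have h2 := h C (-B)
    have h3 := h 1 (-B)
    have hA0 : A = 0 := by nlinarith
    have hC0 : C = 0 := by nlinarith
    subst hA0 hC0
    nlinarith

lemma exists_unit {n : ℕ} (hn : 2 < n) (p q : EuclideanSpace ℝ (Fin n)) (s t : ℝ)
    (h : ∀ l m : ℝ, (l * s + m * t) ^ 2 ≤ ‖l • p + m • q‖ ^ 2) :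
    ∃ u : EuclideanSpace ℝ (Fin n), ‖u‖ ^ 2 = 1 ∧ inner ℝ p u = s ∧ inner ℝ q u = t := by
  obtain ⟨v, hv1, hvp, hvq⟩ : ∃ v : EuclideanSpace ℝ (Fin n),
      ‖v‖ ^ 2 ≤ 1 ∧ inner ℝ p v = s ∧ inner ℝ q v = t := by
    set c : ℝ := inner ℝ p q / ‖p‖ ^ 2 with hc
    set q' := q - c • p with hq'
    set t' := t - c * s with ht'
    have hcp : c * ‖p‖ ^ 2 = inner ℝ p q := by
      by_cases hp : p = 0
      · simp [hp]
      · rw [hc]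
        have : ‖p‖ ≠ 0 := by simpa using hp
        field_simp
    have horth : inner ℝ p q' = 0 := by
      rw [hq', inner_sub_right, inner_smul_right, real_inner_self_eq_norm_sq, hcp, sub_self]
    have hs : s / ‖p‖ ^ 2 * ‖p‖ ^ 2 = s := by
      by_cases hp : p = 0
      · have := h 1 0
        simp [hp] at this
        have hs0 : s = 0 := this
        simp [hp, hs0]
      · have : ‖p‖ ≠ 0 := by simpa using hp
        field_simp
    have ht : t' / ‖q'‖ ^ 2 * ‖q'‖ ^ 2 = t' := by
      by_cases hp : q' = 0
      · have := h (-c) 1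
        rw [show (-c) • p + (1:ℝ) • q = q' by rw [hq']; module, hp] at this
        have hs0 : t' = 0 := by
          have h2 : t' ^ 2 ≤ 0 := by
            rw [ht']; simp at this; nlinarith
          exact pow_eq_zero_iff (two_ne_zero) |>.1 (le_antisymm h2 (sq_nonneg _))
        simp [hs0]
      · have : ‖q'‖ ≠ 0 := by simpa using hp
        field_simp
    set α := s / ‖p‖ ^ 2
    set β := t' / ‖q'‖ ^ 2
    have horth' : inner ℝ q' p = 0 := by rw [real_inner_comm]; exact horth
    have hqq : q = q' + c • p := by rw [hq']; abel
    have h1 : inner ℝ p (α • p + β • q') = s := by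
      rw [inner_add_right, inner_smul_right, inner_smul_right, horth,
        real_inner_self_eq_norm_sq, hs]; ring
    have h2 : inner ℝ q' (α • p + β • q') = t' := by
      rw [inner_add_right, inner_smul_right, inner_smul_right, horth',
        real_inner_self_eq_norm_sq, ht]; ring
    have h3 : inner ℝ q (α • p + β • q') = t := by
      rw [hqq, inner_add_left, inner_smul_left, h1, h2]
      simp [ht']
    refine ⟨α • p + β • q', ?_, h1, h3⟩
    have h4 : ‖α • p + β • q'‖ ^ 2 = α * s + β * t' := by
      rw [← real_inner_self_eq_norm_sq]
      conv_lhs => rw [inner_add_left, inner_smul_left, inner_smul_left, h1, h2]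
      simp
    have h5 := h (α - β * c) β
    rw [show (α - β * c) • p + β • q = α • p + β • q' by rw [hq']; module,
      show (α - β * c) * s + β * t = α * s + β * t' by rw [ht']; ring, h4] at h5
    rw [h4]
    by_contra hlt
    push Not at hlt
    nlinarith
  obtain ⟨e, he, hep, heq⟩ : ∃ e : EuclideanSpace ℝ (Fin n),
      e ≠ 0 ∧ inner ℝ p e = 0 ∧ inner ℝ q e = 0 := by
    let T : EuclideanSpace ℝ (Fin n) →ₗ[ℝ] ℝ × ℝ := (innerₛₗ ℝ p).prod (innerₛₗ ℝ q)
    have : LinearMap.ker T ≠ ⊥ := by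
      apply LinearMap.ker_ne_bot_of_finrank_lt
      simpa using hn
    obtain ⟨e, he, he0⟩ := Submodule.exists_mem_ne_zero_of_ne_bot this
    have h' : T e = 0 := he
    have h1 := congrArg Prod.fst h'
    have h2 := congrArg Prod.snd h'
    exact ⟨e, he0, by simpa [T] using h1, by simpa [T] using h2⟩
  have he' : ‖e‖ ≠ 0 := by simpa using he
  -- quadratic equation along the line v + r e
  have hve : ∃ r : ℝ, ‖v + r • e‖ ^ 2 = 1 := by
    have hcont : Continuous fun r : ℝ => ‖v + r • e‖ ^ 2 := by fun_prop
    have hR : (1:ℝ) ≤ ‖v + (3 / ‖e‖) • e‖ ^ 2 := by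
      have h1 : ‖(3 / ‖e‖) • e‖ = 3 := by
        rw [norm_smul, Real.norm_eq_abs, abs_of_nonneg (by positivity)]
        field_simp
      have h2 := norm_sub_le (v + (3 / ‖e‖) • e) v
      rw [add_sub_cancel_left, h1] at h2
      have h3 : ‖v‖ ≤ 1 := by nlinarith [norm_nonneg v]
      nlinarith
    obtain ⟨r, -, hr⟩ := intermediate_value_Icc (f := fun r : ℝ => ‖v + r • e‖ ^ 2)
      (show (0:ℝ) ≤ 3 / ‖e‖ by positivity) hcont.continuousOn
      (show (1:ℝ) ∈ _ from ⟨by simpa using hv1, hR⟩)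
    exact ⟨r, hr⟩
  obtain ⟨r, hr⟩ := hve
  exact ⟨v + r • e, hr, by rw [inner_add_right, inner_smul_right, hep, hvp]; ring,
    by rw [inner_add_right, inner_smul_right, heq, hvq]; ring⟩

noncomputable def reV {n : ℕ} (z : Fin (n + 1) → ℂ) : EuclideanSpace ℝ (Fin n) :=
  WithLp.toLp 2 fun j => (z j.castSucc).re

noncomputable def imV {n : ℕ} (z : Fin (n + 1) → ℂ) : EuclideanSpace ℝ (Fin n) :=
  WithLp.toLp 2 fun j => (z j.castSucc).im

lemma herm_re {n : ℕ} (z w : Fin (n + 1) → ℂ) : (herm n z w).re =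
    inner ℝ (reV z) (reV w) + inner ℝ (imV z) (imV w)
      - (z (Fin.last n)).re * (w (Fin.last n)).re - (z (Fin.last n)).im * (w (Fin.last n)).im := by
  simp only [herm, reV, imV, PiLp.inner_apply, Complex.sub_re, Complex.re_sum, Complex.mul_re,
    Complex.conj_re, Complex.conj_im, RCLike.inner_apply, conj_trivial]
  simp only [mul_neg, sub_neg_eq_add, Finset.sum_add_distrib, mul_comm]
  ring

lemma herm_im {n : ℕ} (z w : Fin (n + 1) → ℂ) : (herm n z w).im =
    inner ℝ (imV z) (reV w) - inner ℝ (reV z) (imV w)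
      - (z (Fin.last n)).im * (w (Fin.last n)).re + (z (Fin.last n)).re * (w (Fin.last n)).im := by
  simp only [herm, reV, imV, PiLp.inner_apply, Complex.sub_im, Complex.im_sum, Complex.mul_im,
    Complex.conj_re, Complex.conj_im, RCLike.inner_apply, conj_trivial]
  simp only [mul_neg, Finset.sum_add_distrib, Finset.sum_neg_distrib, mul_comm]
  ring

lemma reV_conj {n : ℕ} (z : Fin (n + 1) → ℂ) : reV (conjVec n z) = reV z := by
  ext j; simp [reV, conjVec]

lemma imV_conj {n : ℕ} (z : Fin (n + 1) → ℂ) : imV (conjVec n z) = -imV z := by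
  ext j; simp [imV, conjVec]

lemma cond_iff {n : ℕ} (z : Fin (n + 1) → ℂ) :
    (0 ≤ (herm n z z).re ∧ fdet n z ≤ 0) ↔ ∀ l m : ℝ,
      (l * (z (Fin.last n)).re + m * (z (Fin.last n)).im) ^ 2 ≤ ‖l • reV z + m • imV z‖ ^ 2 := by
  have key := gram_iff (inner ℝ (reV z) (reV z) - (z (Fin.last n)).re ^ 2)
    (inner ℝ (reV z) (imV z) - (z (Fin.last n)).re * (z (Fin.last n)).im)
    (inner ℝ (imV z) (imV z) - (z (Fin.last n)).im ^ 2)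
  have hr : ∀ l m : ℝ, ‖l • reV z + m • imV z‖ ^ 2 = l ^ 2 * inner ℝ (reV z) (reV z)
      + 2 * l * m * inner ℝ (reV z) (imV z) + m ^ 2 * inner ℝ (imV z) (imV z) := by
    intro l m
    rw [← real_inner_self_eq_norm_sq]
    simp only [inner_add_left, inner_add_right, inner_smul_left, inner_smul_right, conj_trivial]
    rw [real_inner_comm (reV z) (imV z)]
    ring
  have hl : (0 ≤ (herm n z z).re ∧ fdet n z ≤ 0) ↔ (0 ≤
      (inner ℝ (reV z) (reV z) - (z (Fin.last n)).re ^ 2) +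
      (inner ℝ (imV z) (imV z) - (z (Fin.last n)).im ^ 2) ∧
      (inner ℝ (reV z) (imV z) - (z (Fin.last n)).re * (z (Fin.last n)).im) ^ 2 ≤
      (inner ℝ (reV z) (reV z) - (z (Fin.last n)).re ^ 2) *
      (inner ℝ (imV z) (imV z) - (z (Fin.last n)).im ^ 2)) := by
    rw [fdet, Complex.normSq_apply]
    simp only [herm_re, herm_im, reV_conj, imV_conj, inner_neg_right]
    simp only [conjVec, Complex.conj_re, Complex.conj_im]
    rw [real_inner_comm (reV z) (imV z)]
    constructor
    · rintro ⟨h1, h2⟩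
      exact ⟨by linarith, by linarith⟩
    · rintro ⟨h1, h2⟩
      exact ⟨by linarith, by linarith⟩
  rw [hl, key]
  refine forall_congr' fun l => forall_congr' fun m => ?_
  rw [hr, ← sub_nonneg]
  apply iff_of_eq
  rw [← sub_nonneg (b := (_ + _) ^ 2)]
  congr 1
  ring

lemma mem_iff {n : ℕ} (hn : 2 < n) (z : Fin (n + 1) → ℂ) :
    (∃ w ∈ Scone n, herm n z w = 0) ↔ (0 ≤ (herm n z z).re ∧ fdet n z ≤ 0) := by
  rw [cond_iff]
  constructor
  · rintro ⟨w, ⟨hw0, hwr, hww⟩, hzw⟩ l m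
    have him : ∀ j, (w j).im = 0 := fun j => Complex.conj_eq_iff_im.1 (congrFun hwr j)
    have himV : imV w = 0 := by ext j; simp [imV, him]
    have h1 := congrArg Complex.re hww
    have h2 := congrArg Complex.re hzw
    have h3 := congrArg Complex.im hzw
    rw [herm_re] at h1 h2
    rw [herm_im] at h3
    simp only [himV, him, inner_zero_right, Complex.zero_re, Complex.zero_im,
      real_inner_self_eq_norm_sq] at h1 h2 h3
    set r := (w (Fin.last n)).re with hr
    have hr0 : r ≠ 0 := by
      intro h0
      rw [h0] at h1
      have h4 : reV w = 0 := by
        have : ‖reV w‖ ^ 2 = 0 := by linarith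
        simpa using this
      apply hw0
      ext j
      refine Complex.ext ?_ (him j)
      induction j using Fin.lastCases with
      | last => exact h0
      | cast j => exact congrFun (congrArg WithLp.ofLp h4) j
    have h5 : inner ℝ (l • reV z + m • imV z) (reV w)
        = (l * (z (Fin.last n)).re + m * (z (Fin.last n)).im) * r := by
      simp only [inner_add_left, inner_smul_left, conj_trivial]
      linear_combination l * h2 + m * h3
    have h6 := abs_real_inner_le_norm (l • reV z + m • imV z) (reV w)
    rw [h5] at h6
    have h7 := pow_le_pow_left₀ (abs_nonneg _) h6 2
    rw [sq_abs, mul_pow, mul_pow, show ‖reV w‖ ^ 2 = r ^ 2 by linarith] at h7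
    exact le_of_mul_le_mul_right h7 (by positivity)
  · intro h
    obtain ⟨u, hu, hp, hq⟩ := exists_unit hn _ _ _ _ h
    let w : Fin (n + 1) → ℂ := Fin.snoc (α := fun _ => ℂ) (fun j => ((u j : ℝ) : ℂ)) 1
    have hwl : w (Fin.last n) = 1 := by simp [w]
    have hwc : ∀ j : Fin n, w j.castSucc = ((u j : ℝ) : ℂ) := by intro j; simp [w]
    have hre : reV w = u := by ext j; simp [reV, hwc]
    have him : imV w = 0 := by ext j; simp [imV, hwc]
    refine ⟨w, ⟨?_, ?_, ?_⟩, ?_⟩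
    · intro h0
      rw [h0] at hwl
      simp at hwl
    · ext j
      induction j using Fin.lastCases with
      | last => simp [conjVec, hwl]
      | cast j => simp [conjVec, hwc]
    · apply Complex.ext
      · rw [herm_re, hre, him, hwl, real_inner_self_eq_norm_sq, hu]; simp
      · rw [herm_im, hre, him, hwl]; simp
    · apply Complex.ext
      · rw [herm_re, hre, him, hwl, hp]; simp
      · rw [herm_im, hre, him, hwl, hq]; simp

lemma continuous_herm {n : ℕ} : Continuous fun z : Fin (n + 1) → ℂ => herm n z z := by
  unfold herm
  fun_prop

lemma continuous_fdet {n : ℕ} : Continuous fun z : Fin (n + 1) → ℂ => fdet n z := by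
  unfold fdet herm conjVec
  have := Complex.continuous_normSq
  refine Continuous.sub (this.comp ?_) ?_ <;> fun_prop

end Aux

/-- (Theorem 2 / `teo:dos`, cone version): For `n > 2`, the cone over the Kulkarni limit
set is the real semi-algebraic set `{z ≠ 0 : ⟨z,z⟩ ≥ 0 and f(z) ≤ 0}`, and it has
nonempty interior in `ℂ^{n+1}`. -/
theorem lambdaCone_semialgebraic (n : ℕ) (hn : 2 < n) :
    LambdaCone n =
      {z : Fin (n + 1) → ℂ | z ≠ 0 ∧ 0 ≤ (herm n z z).re ∧ fdet n z ≤ 0} ∧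
    (interior (LambdaCone n)).Nonempty := by
  have heq : LambdaCone n =
      {z : Fin (n + 1) → ℂ | z ≠ 0 ∧ 0 ≤ (herm n z z).re ∧ fdet n z ≤ 0} := by
    ext z
    exact and_congr_right fun _ => mem_iff hn z
  refine ⟨heq, ?_⟩
  have hopen : IsOpen {z : Fin (n + 1) → ℂ | 0 < (herm n z z).re ∧ fdet n z < 0} :=
    (isOpen_lt continuous_const (Complex.continuous_re.comp continuous_herm)).inter
      (isOpen_lt continuous_fdet continuous_const)
  have hsub : {z : Fin (n + 1) → ℂ | 0 < (herm n z z).re ∧ fdet n z < 0} ⊆ LambdaCone n := by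
    rw [heq]
    rintro z ⟨h1, h2⟩
    refine ⟨?_, h1.le, h2.le⟩
    rintro rfl
    simp [herm] at h1
  let i : Fin n := ⟨0, by omega⟩
  let j : Fin n := ⟨1, by omega⟩
  have hij : i ≠ j := by simp [i, j]
  let z : Fin (n + 1) → ℂ := Fin.snoc (α := fun _ => ℂ) (Pi.single i 1 + Pi.single j Complex.I) 0
  have hzl : z (Fin.last n) = 0 := by simp [z]
  have hre : reV z = EuclideanSpace.single i 1 := by
    ext k
    by_cases h1 : k = i <;> by_cases h2 : k = j <;> simp_all [reV, z, Pi.single_apply]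
  have him : imV z = EuclideanSpace.single j 1 := by
    ext k
    by_cases h1 : k = i <;> by_cases h2 : k = j <;> simp_all [imV, z, Pi.single_apply]
  refine ⟨z, interior_maximal hsub hopen ⟨?_, ?_⟩⟩
  · rw [herm_re, hzl, hre, him]
    simp
  · rw [fdet, Complex.normSq_apply]
    simp only [herm_re, herm_im, reV_conj, imV_conj, inner_neg_right, hre, him]
    have h1 : inner ℝ (EuclideanSpace.single i (1:ℝ)) (EuclideanSpace.single j (1:ℝ)) = 0 := by
      rw [EuclideanSpace.inner_single_left]; simp [hij]
    rw [real_inner_comm (EuclideanSpace.single i (1:ℝ)) (EuclideanSpace.single j (1:ℝ)), h1]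
    simp [conjVec, hzl]
    try norm_num
end

section
/- Let n > 2. Let ℙ_ℂⁿ be the projectivization of ℂ^{n+1} with the quotient topology and [·] the quotient map. Let Ω̃ = {z ∈ ℂ^{n+1} \ {0} : f(z) > 0} ∪ {z ∈ ℂ^{n+1} \ {0} : z real and ⟨z,z⟩ < 0}, let Ω = {[z] : z ∈ Ω̃}, let H = {[z] : z real, ⟨z,z⟩ < 0} (a copy of H_ℝⁿ), and let o = [(0,…,0,1)]. Then there exists a map Π : Ω → ℙ_ℂⁿ such that: (i) for every z with f(z) > 0 and every η ∈ ℂ with η² = −⟨z,z̄⟩, one has conj(η)·z + η·z̄ ≠ 0 and Π([z]) = [conj(η)·z + η·z̄]; (ii) Π([z]) = [z] for every real z with ⟨z,z⟩ < 0; (iii) the image of Π is exactly H; (iv) Π is equivariant: for every real matrix A with AᵀJA = J (J = diag(1,…,1,−1)) and every z ∈ Ω̃, Π([Az]) is the image under A of Π([z]) (i.e. if Π([z]) = [v] then Π([Az]) = [Av]); (v) Π is a locally trivial fibre bundle: for every x ∈ H there exist an open neighborhood U of x in H and a homeomorphism φ : Π⁻¹(U) → U × Π⁻¹({o}) (all with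 the subspace topologies) whose first component is Π. -/
open scoped ComplexConjugate

/-- The quotient topology on a projectivization. -/
noncomputable instance projTop (K V : Type*) [DivisionRing K] [AddCommGroup V] [Module K V]
    [TopologicalSpace V] : TopologicalSpace (Projectivization K V) :=
  inferInstanceAs (TopologicalSpace (Quotient (projectivizationSetoid K V)))

/-- The cone over the Kulkarni discontinuity region `Ω`. -/
def OmegaCone (n : ℕ) : Set (Fin (n + 1) → ℂ) :=
  {z | z ≠ 0 ∧ 0 < fdet n z} ∪ {z | z ≠ 0 ∧ IsRealVec n z ∧ (herm n z z).re < 0}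

/-- The Kulkarni discontinuity region `Ω ⊂ ℙ_ℂⁿ`. -/
def OmegaSet (n : ℕ) : Set (Projectivization ℂ (Fin (n + 1) → ℂ)) :=
  {p | ∃ z : Fin (n + 1) → ℂ, ∃ hz : z ≠ 0, z ∈ OmegaCone n ∧ Projectivization.mk ℂ z hz = p}

/-- The copy of real hyperbolic space `H_ℝⁿ ⊂ ℙ_ℂⁿ`. -/
def HSet (n : ℕ) : Set (Projectivization ℂ (Fin (n + 1) → ℂ)) :=
  {p | ∃ z : Fin (n + 1) → ℂ, ∃ hz : z ≠ 0,
    IsRealVec n z ∧ (herm n z z).re < 0 ∧ Projectivization.mk ℂ z hz = p}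

/-- The origin `o = [0 : ⋯ : 0 : 1]`. -/
noncomputable def oPoint (n : ℕ) : Projectivization ℂ (Fin (n + 1) → ℂ) :=
  Projectivization.mk ℂ (Pi.single (Fin.last n) 1)
    (fun h => by simpa using congrFun h (Fin.last n))

/-- The complex bilinear form. -/
noncomputable def bil (n : ℕ) (z w : Fin (n + 1) → ℂ) : ℂ :=
  (∑ j : Fin n, z j.castSucc * w j.castSucc) - z (Fin.last n) * w (Fin.last n)

lemma herm_eq (n : ℕ) (z w : Fin (n + 1) → ℂ) : herm n z w = bil n z (conjVec n w) := rfl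

lemma conjVec_conjVec (n : ℕ) (z : Fin (n + 1) → ℂ) : conjVec n (conjVec n z) = z := by
  funext j; simp [conjVec]

lemma conjVec_add (n : ℕ) (z w : Fin (n + 1) → ℂ) :
    conjVec n (z + w) = conjVec n z + conjVec n w := by
  funext j; simp [conjVec]

lemma conjVec_smul (n : ℕ) (a : ℂ) (z : Fin (n + 1) → ℂ) :
    conjVec n (a • z) = conj a • conjVec n z := by
  funext j; simp [conjVec]

lemma bil_add_left (n : ℕ) (x y z : Fin (n + 1) → ℂ) :
    bil n (x + y) z = bil n x z + bil n y z := by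
  simp only [bil, Pi.add_apply, add_mul, Finset.sum_add_distrib]; ring

lemma bil_smul_left (n : ℕ) (a : ℂ) (x z : Fin (n + 1) → ℂ) :
    bil n (a • x) z = a * bil n x z := by
  simp only [bil, Pi.smul_apply, smul_eq_mul, mul_sub, Finset.mul_sum, mul_assoc]

lemma bil_comm (n : ℕ) (x y : Fin (n + 1) → ℂ) : bil n x y = bil n y x := by
  simp only [bil, mul_comm]

lemma bil_add_right (n : ℕ) (x y z : Fin (n + 1) → ℂ) :
    bil n z (x + y) = bil n z x + bil n z y := by
  rw [bil_comm, bil_add_left, bil_comm n x, bil_comm n y]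

lemma bil_smul_right (n : ℕ) (a : ℂ) (x z : Fin (n + 1) → ℂ) :
    bil n z (a • x) = a * bil n z x := by
  rw [bil_comm, bil_smul_left, bil_comm n x]

lemma bil_conj (n : ℕ) (x y : Fin (n + 1) → ℂ) :
    bil n (conjVec n x) (conjVec n y) = conj (bil n x y) := by
  simp [bil, conjVec]

/-- The base vector. -/
noncomputable def eVec (n : ℕ) : Fin (n + 1) → ℂ := Pi.single (Fin.last n) 1

lemma bil_eVec (n : ℕ) (x : Fin (n + 1) → ℂ) : bil n (eVec n) x = - x (Fin.last n) := by
  simp [bil, eVec, Pi.single_apply, Fin.castSucc_ne_last]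

lemma conj_eVec (n : ℕ) : conjVec n (eVec n) = eVec n := by
  funext j; by_cases h : j = Fin.last n <;> simp [conjVec, eVec, Pi.single_apply, h]

lemma eVec_last (n : ℕ) : eVec n (Fin.last n) = 1 := by simp [eVec]

lemma eVec_ne (n : ℕ) : eVec n ≠ 0 := fun h => by simpa [eVec] using congrFun h (Fin.last n)

/-- The open cone containing all of the lifts of `Ω`. -/
def DCone (n : ℕ) : Set (Fin (n + 1) → ℂ) :=
  {z | bil n z z ≠ 0 ∧ (bil n z (conjVec n z)).re < ‖bil n z z‖}

lemma herm_conj_eq (n : ℕ) (z : Fin (n + 1) → ℂ) : herm n z (conjVec n z) = bil n z z := by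
  rw [herm_eq, conjVec_conjVec]

lemma fdet_eq (n : ℕ) (z : Fin (n + 1) → ℂ) :
    fdet n z = ‖bil n z z‖ ^ 2 - (bil n z (conjVec n z)).re ^ 2 := by
  rw [fdet, herm_conj_eq, herm_eq, Complex.normSq_eq_norm_sq]

lemma bil_self_im (n : ℕ) (z : Fin (n + 1) → ℂ) : (bil n z (conjVec n z)).im = 0 := by
  have h : conj (bil n z (conjVec n z)) = bil n z (conjVec n z) := by
    rw [← bil_conj, conjVec_conjVec, bil_comm]
  exact Complex.conj_eq_iff_im.mp h

lemma bil_self_re (n : ℕ) (z : Fin (n + 1) → ℂ) :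
    bil n z (conjVec n z) = ((bil n z (conjVec n z)).re : ℂ) := by
  apply Complex.ext <;> simp [bil_self_im]

lemma mem_DCone_of_fdet {n : ℕ} {z : Fin (n + 1) → ℂ} (h : 0 < fdet n z) : z ∈ DCone n := by
  rw [fdet_eq] at h
  have h1 : (bil n z (conjVec n z)).re < ‖bil n z z‖ := by
    have := norm_nonneg (bil n z z)
    nlinarith
  refine ⟨fun h0 => ?_, h1⟩
  rw [h0, norm_zero] at h
  nlinarith [sq_nonneg (bil n z (conjVec n z)).re]

lemma mem_DCone_of_real {n : ℕ} {z : Fin (n + 1) → ℂ} (hr : IsRealVec n z)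
    (h : (bil n z z).re < 0) : z ∈ DCone n := by
  have h0 : bil n z z ≠ 0 := fun h0 => by rw [h0] at h; simp at h
  refine ⟨h0, ?_⟩
  rw [show conjVec n z = z from hr]
  exact h.trans (norm_pos_iff.mpr h0)

lemma herm_real_s12 {n : ℕ} {z : Fin (n + 1) → ℂ} (hr : IsRealVec n z) :
    herm n z z = bil n z z := by rw [herm_eq, show conjVec n z = z from hr]

lemma mem_DCone {n : ℕ} {z : Fin (n + 1) → ℂ} (h : z ∈ OmegaCone n) : z ∈ DCone n := by
  rcases h with h | h
  · exact mem_DCone_of_fdet h.2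
  · exact mem_DCone_of_real h.2.1 (by rw [← herm_real_s12 h.2.1]; exact h.2.2)

lemma last_ne {n : ℕ} {x : Fin (n + 1) → ℂ} (hr : IsRealVec n x) (h : (bil n x x).re < 0) :
    x (Fin.last n) ≠ 0 := by
  intro h0
  have him : ∀ j, (x j).im = 0 := fun j => Complex.conj_eq_iff_im.mp (congrFun hr j)
  have : 0 ≤ (bil n x x).re := by
    simp only [bil, h0, mul_zero, sub_zero, Complex.re_sum, Complex.mul_re, him]
    exact Finset.sum_nonneg fun j _ => mul_self_nonneg _
  linarith

/-- The real vector `conj η z + η conj z`. -/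
noncomputable def wv (n : ℕ) (η : ℂ) (z : Fin (n + 1) → ℂ) : Fin (n + 1) → ℂ :=
  conj η • z + η • conjVec n z

lemma wv_real (n : ℕ) (η : ℂ) (z : Fin (n + 1) → ℂ) : IsRealVec n (wv n η z) := by
  rw [IsRealVec, wv, conjVec_add, conjVec_smul, conjVec_smul, conjVec_conjVec, Complex.conj_conj]
  exact add_comm _ _

lemma conj_mul_eq {n : ℕ} {η : ℂ} {z : Fin (n + 1) → ℂ} (h : η ^ 2 = - bil n z z) :
    conj η * η = (‖bil n z z‖ : ℂ) := by
  have : ‖η‖ ^ 2 = ‖bil n z z‖ := by rw [← norm_pow, h, norm_neg]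
  rw [← this, mul_comm, Complex.mul_conj, Complex.normSq_eq_norm_sq]

lemma wv_bil {n : ℕ} {η : ℂ} {z : Fin (n + 1) → ℂ} (h : η ^ 2 = - bil n z z) :
    bil n (wv n η z) (wv n η z) =
      ((2 * ‖bil n z z‖ * ((bil n z (conjVec n z)).re - ‖bil n z z‖) : ℝ) : ℂ) := by
  have h1 := conj_mul_eq h
  have h2 : bil n (conjVec n z) (conjVec n z) = - (conj η) ^ 2 := by
    rw [bil_conj, ← map_pow, h]; simp
  have h3 : bil n z z = - η ^ 2 := by rw [h]; ring
  simp only [wv, bil_add_left, bil_add_right, bil_smul_left, bil_smul_right]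
  rw [bil_comm n (conjVec n z) z, h2]
  push_cast
  rw [← bil_self_re, ← h1, h3]
  ring

lemma wv_neg {n : ℕ} {η : ℂ} {z : Fin (n + 1) → ℂ} (h : η ^ 2 = - bil n z z)
    (hz : z ∈ DCone n) : (bil n (wv n η z) (wv n η z)).re < 0 := by
  rw [wv_bil h, Complex.ofReal_re]
  have := norm_pos_iff.mpr hz.1
  have := hz.2
  apply mul_neg_of_pos_of_neg <;> linarith

/-- The root-free lift of the projection. -/
noncomputable def Wv (n : ℕ) (z : Fin (n + 1) → ℂ) : Fin (n + 1) → ℂ := fun j =>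
  -(conj (bil n z z)) * (z j * z (Fin.last n)) - bil n z z * conj (z j * z (Fin.last n))
    + (‖bil n z z‖ : ℂ) * (z j * conj (z (Fin.last n)) + conj (z j) * z (Fin.last n))

lemma Wv_eq {n : ℕ} {η : ℂ} {z : Fin (n + 1) → ℂ} (h : η ^ 2 = - bil n z z) :
    Wv n z = (wv n η z (Fin.last n)) • wv n η z := by
  have h1 := conj_mul_eq h
  have h3 : bil n z z = - η ^ 2 := by rw [h]; ring
  funext j
  simp only [Wv, wv, Pi.add_apply, Pi.smul_apply, smul_eq_mul, conjVec]
  rw [← h1, h3]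
  simp only [map_neg, map_pow, map_mul]
  ring

lemma Wv_smul (n : ℕ) (a : ℂ) (z : Fin (n + 1) → ℂ) :
    Wv n (a • z) = ((‖a‖ : ℂ) ^ 4) • Wv n z := by
  have h : (‖a‖ : ℂ) ^ 2 = a * conj a := by
    rw [Complex.mul_conj, Complex.normSq_eq_norm_sq]; push_cast; rfl
  have h4 : (‖a‖ : ℂ) ^ 4 = (a * conj a) ^ 2 := by rw [← h]; ring
  funext j
  simp only [Wv, Pi.smul_apply, smul_eq_mul, bil_smul_left, bil_smul_right, norm_mul, map_mul]
  push_cast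
  rw [h4, show ∀ x : ℂ, (‖a‖ : ℂ) * ((‖a‖ : ℂ) * x) = (‖a‖ : ℂ) ^ 2 * x from fun x => by ring, h]
  ring

lemma exists_root (c : ℂ) : ∃ η : ℂ, η ^ 2 = c :=
  ⟨c ^ ((1 : ℂ) / 2), by rw [← Complex.cpow_nat_mul]; simp⟩

lemma Wv_real {n : ℕ} (z : Fin (n + 1) → ℂ) : IsRealVec n (Wv n z) := by
  obtain ⟨η, h⟩ := exists_root (- bil n z z)
  have hr := wv_real n η z
  have hk : conj (wv n η z (Fin.last n)) = wv n η z (Fin.last n) := congrFun hr _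
  rw [Wv_eq h, IsRealVec, conjVec_smul, hk, show conjVec n (wv n η z) = wv n η z from hr]

lemma Wv_neg {n : ℕ} {z : Fin (n + 1) → ℂ} (hz : z ∈ DCone n) :
    (bil n (Wv n z) (Wv n z)).re < 0 := by
  obtain ⟨η, h⟩ := exists_root (- bil n z z)
  have hr := wv_real n η z
  have hk : (wv n η z (Fin.last n)).im = 0 := Complex.conj_eq_iff_im.mp (congrFun hr _)
  have h0 := last_ne hr (wv_neg h hz)
  have hre : (wv n η z (Fin.last n)).re ≠ 0 := fun h' => h0 (Complex.ext h' hk)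
  have := wv_neg h hz
  rw [Wv_eq h, bil_smul_left, bil_smul_right, ← mul_assoc, Complex.mul_re, Complex.mul_re,
    Complex.mul_im, hk]
  simp only [mul_zero, zero_mul, add_zero, sub_zero]
  exact mul_neg_of_pos_of_neg (mul_self_pos.mpr hre) this

lemma ne_zero_of_neg {n : ℕ} {z : Fin (n + 1) → ℂ} (hz : (bil n z z).re < 0) : z ≠ 0 := by
  rintro rfl
  simp [bil] at hz

/-- Total version of the projectivization map. -/
noncomputable def pj (n : ℕ) (v : Fin (n + 1) → ℂ) : Projectivization ℂ (Fin (n + 1) → ℂ) :=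
  open Classical in if h : v ≠ 0 then Projectivization.mk ℂ v h else oPoint n

lemma pj_mk {n : ℕ} {v : Fin (n + 1) → ℂ} (h : v ≠ 0) : pj n v = Projectivization.mk ℂ v h := by
  simp [pj, h]

lemma pj_smul {n : ℕ} {a : ℂ} (ha : a ≠ 0) (v : Fin (n + 1) → ℂ) : pj n (a • v) = pj n v := by
  by_cases h : v = 0
  · simp [h]
  · rw [pj_mk h, pj_mk (smul_ne_zero ha h), Projectivization.mk_eq_mk_iff']
    exact ⟨a, rfl⟩

lemma pj_eq {n : ℕ} {v w : Fin (n + 1) → ℂ} (hv : v ≠ 0) (hw : w ≠ 0) (h : pj n v = pj n w) :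
    ∃ a : ℂ, a ≠ 0 ∧ v = a • w := by
  rw [pj_mk hv, pj_mk hw, Projectivization.mk_eq_mk_iff'] at h
  obtain ⟨a, ha⟩ := h
  refine ⟨a, ?_, ha.symm⟩
  rintro rfl
  exact hv (by rw [← ha, zero_smul])

lemma pj_rep {n : ℕ} (p : Projectivization ℂ (Fin (n + 1) → ℂ)) : pj n p.rep = p := by
  rw [pj_mk p.rep_nonzero, Projectivization.mk_rep]

lemma rep_pj {n : ℕ} {z : Fin (n + 1) → ℂ} (hz : z ≠ 0) :
    ∃ a : ℂ, a ≠ 0 ∧ (pj n z).rep = a • z :=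
  pj_eq (Projectivization.rep_nonzero _) hz (pj_rep _)

lemma oPoint_eq (n : ℕ) : oPoint n = pj n (eVec n) := by
  rw [pj_mk (eVec_ne n)]; rfl

lemma continuous_mk (n : ℕ) : Continuous (fun v : {v : Fin (n + 1) → ℂ // v ≠ 0} =>
    Projectivization.mk ℂ v.1 v.2) :=
  continuous_quotient_mk'

lemma isOpen_proj {n : ℕ} {s : Set (Projectivization ℂ (Fin (n + 1) → ℂ))}
    (h : IsOpen ((fun v : {v : Fin (n + 1) → ℂ // v ≠ 0} =>
    Projectivization.mk ℂ v.1 v.2) ⁻¹' s)) : IsOpen s := h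

open Filter Topology in
lemma map_pj {n : ℕ} {z : Fin (n + 1) → ℂ} (hz : z ≠ 0) :
    Filter.map (pj n) (𝓝 z) = 𝓝 (pj n z) := by
  have hop : IsOpen {v : Fin (n + 1) → ℂ | v ≠ 0} := isOpen_ne
  apply le_antisymm
  · have hc : ContinuousOn (pj n) {v : Fin (n + 1) → ℂ | v ≠ 0} := by
      rw [continuousOn_iff_continuous_domRestrict]
      exact (continuous_mk n).congr fun v => (pj_mk v.2).symm
    exact hc.continuousAt (hop.mem_nhds hz)
  · intro s hs
    rw [mem_map] at hs
    obtain ⟨O, hO, hOo, hzO⟩ := mem_nhds_iff.mp (inter_mem hs (hop.mem_nhds hz))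
    refine mem_of_superset (IsOpen.mem_nhds (s := pj n '' O) ?_ ⟨z, hzO, rfl⟩) ?_
    · apply isOpen_proj
      have : (fun v : {v : Fin (n + 1) → ℂ // v ≠ 0} =>
          Projectivization.mk ℂ v.1 v.2) ⁻¹' (pj n '' O) =
          ⋃ a : {a : ℂ // a ≠ 0}, {v | a.1 • v.1 ∈ O} := by
        ext v
        simp only [Set.mem_preimage, Set.mem_image, Set.mem_iUnion, Set.mem_setOf_eq]
        constructor
        · rintro ⟨w, hw, hwv⟩
          rw [← pj_mk v.2] at hwv
          obtain ⟨a, ha, rfl⟩ := pj_eq (hO hw).2 v.2 hwv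
          exact ⟨⟨a, ha⟩, hw⟩
        · rintro ⟨a, ha⟩
          exact ⟨_, ha, by rw [pj_smul a.2, pj_mk v.2]⟩
      rw [this]
      refine isOpen_iUnion fun a => hOo.preimage ?_
      fun_prop
    · rintro _ ⟨w, hw, rfl⟩
      exact (hO hw).1

/-- The projection on projective space. -/
noncomputable def FF (n : ℕ) (p : Projectivization ℂ (Fin (n + 1) → ℂ)) :
    Projectivization ℂ (Fin (n + 1) → ℂ) := pj n (Wv n p.rep)

lemma FF_pj {n : ℕ} {z : Fin (n + 1) → ℂ} (hz : z ≠ 0) : FF n (pj n z) = pj n (Wv n z) := by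
  obtain ⟨a, ha, h⟩ := rep_pj hz
  rw [FF, h, Wv_smul, pj_smul]
  simpa using ha

lemma continuous_bil (n : ℕ) :
    Continuous (fun p : (Fin (n + 1) → ℂ) × (Fin (n + 1) → ℂ) => bil n p.1 p.2) := by
  unfold bil; fun_prop

lemma continuous_bil' {X : Type*} [TopologicalSpace X] {n : ℕ} {f g : X → Fin (n + 1) → ℂ}
    (hf : Continuous f) (hg : Continuous g) : Continuous (fun x => bil n (f x) (g x)) :=
  (continuous_bil n).comp (hf.prodMk hg)

lemma continuous_Wv (n : ℕ) : Continuous (Wv n) := by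
  have := continuous_bil' (n := n) continuous_id continuous_id
  simp only [id] at this
  refine continuous_pi fun j => ?_
  unfold Wv
  have hc : Continuous (fun z : ℂ => conj z) := Complex.continuous_conj
  have h1 : Continuous (fun z : Fin (n + 1) → ℂ => conj (bil n z z)) := hc.comp this
  have h2 : ∀ j, Continuous (fun z : Fin (n + 1) → ℂ => conj (z j)) :=
    fun j => hc.comp (continuous_apply j)
  have h3 : Continuous (fun z : Fin (n + 1) → ℂ => (‖bil n z z‖ : ℂ)) :=
    Complex.continuous_ofReal.comp this.norm
  have h4 := h2 j
  have h5 := h2 (Fin.last n)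
  simp only [map_mul]
  fun_prop

open Filter Topology in
lemma FF_continuousAt {n : ℕ} {z : Fin (n + 1) → ℂ} (hz : z ≠ 0) (hW : Wv n z ≠ 0) :
    ContinuousAt (FF n) (pj n z) := by
  rw [ContinuousAt, ← map_pj hz, tendsto_map'_iff, FF_pj hz, ← map_pj hW]
  have h1 : Tendsto (fun v => pj n (Wv n v)) (𝓝 z) (map (pj n) (𝓝 (Wv n z))) :=
    tendsto_map.comp (continuous_Wv n).continuousAt
  refine h1.congr' ?_
  filter_upwards [isOpen_ne.mem_nhds hz] with v hv
  exact (FF_pj hv).symm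

/-- A general equivariance statement. -/
lemma equiv_general {n : ℕ} (L : (Fin (n + 1) → ℂ) →ₗ[ℂ] (Fin (n + 1) → ℂ)) {c : ℝ} (hc : c ≠ 0)
    (hconj : ∀ v, L (conjVec n v) = conjVec n (L v))
    (hb : ∀ v w, bil n (L v) (L w) = (c : ℂ) ^ 2 * bil n v w)
    {z : Fin (n + 1) → ℂ} (hz : z ∈ DCone n) :
    pj n (Wv n (L z)) = pj n (L (Wv n z)) := by
  obtain ⟨η, h⟩ := exists_root (- bil n z z)
  have hc' : (c : ℂ) ≠ 0 := by exact_mod_cast hc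
  have h' : ((c : ℂ) * η) ^ 2 = - bil n (L z) (L z) := by rw [hb, mul_pow, h]; ring
  have hw : wv n (c * η) (L z) = (c : ℂ) • L (wv n η z) := by
    simp only [wv, map_add, map_smul, hconj, map_mul, Complex.conj_ofReal, smul_add, smul_smul]
  have hLz : L z ∈ DCone n := by
    have hc2 : 0 < c ^ 2 := by positivity
    refine ⟨by rw [hb]; exact mul_ne_zero (pow_ne_zero _ hc') hz.1, ?_⟩
    rw [← hconj, hb, hb, norm_mul, norm_pow, Complex.norm_real, Real.norm_eq_abs, sq_abs,
      ← Complex.ofReal_pow, Complex.re_ofReal_mul]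
    exact mul_lt_mul_of_pos_left hz.2 hc2
  have hnegL := wv_neg h' hLz
  rw [Wv_eq h', Wv_eq h, map_smul, pj_smul, pj_smul, hw, pj_smul hc']
  · exact last_ne (wv_real _ _ _) (wv_neg h hz)
  · exact last_ne (wv_real _ _ _) hnegL

/-- The scaled half-turn. -/
noncomputable def Ru (n : ℕ) (u : Fin (n + 1) → ℂ) : (Fin (n + 1) → ℂ) →ₗ[ℂ] (Fin (n + 1) → ℂ) where
  toFun v := -(bil n u u) • v + (2 * bil n v u) • u
  map_add' v w := by
    rw [bil_add_left]; module
  map_smul' a v := by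
    rw [bil_smul_left]; simp only [RingHom.id_apply]; module

lemma Ru_apply (n : ℕ) (u v : Fin (n + 1) → ℂ) :
    Ru n u v = -(bil n u u) • v + (2 * bil n v u) • u := rfl

lemma Ru_conj {n : ℕ} {u : Fin (n + 1) → ℂ} (hu : IsRealVec n u) (v : Fin (n + 1) → ℂ) :
    Ru n u (conjVec n v) = conjVec n (Ru n u v) := by
  have hu' : conjVec n u = u := hu
  simp only [Ru_apply, conjVec_add, conjVec_smul, map_neg, map_mul, ← bil_conj, hu', Complex.conj_ofNat]

lemma Ru_bil (n : ℕ) (u v w : Fin (n + 1) → ℂ) :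
    bil n (Ru n u v) (Ru n u w) = (bil n u u) ^ 2 * bil n v w := by
  simp only [Ru_apply, bil_add_left, bil_add_right, bil_smul_left, bil_smul_right]
  rw [bil_comm n u w]
  ring

lemma Ru_Ru (n : ℕ) (u v : Fin (n + 1) → ℂ) :
    Ru n u (Ru n u v) = ((bil n u u) ^ 2) • v := by
  simp only [Ru_apply, bil_add_left, bil_smul_left]
  module

lemma Ru_smul (n : ℕ) (a : ℂ) (u v : Fin (n + 1) → ℂ) :
    Ru n (a • u) v = (a ^ 2) • Ru n u v := by
  simp only [Ru_apply, bil_smul_left, bil_smul_right]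
  module

/-- Normalization. -/
noncomputable def Nv (n : ℕ) (x : Fin (n + 1) → ℂ) : Fin (n + 1) → ℂ :=
  conj (x (Fin.last n)) • x

/-- The reflection vector. -/
noncomputable def uv (n : ℕ) (x : Fin (n + 1) → ℂ) : Fin (n + 1) → ℂ :=
  Nv n x + (Real.sqrt (-(bil n (Nv n x) (Nv n x)).re) : ℂ) • eVec n

lemma Nv_smul (n : ℕ) (a : ℂ) (x : Fin (n + 1) → ℂ) :
    Nv n (a • x) = ((‖a‖ ^ 2 : ℝ) : ℂ) • Nv n x := by
  have h : ((‖a‖ ^ 2 : ℝ) : ℂ) = a * conj a := by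
    rw [Complex.mul_conj, Complex.normSq_eq_norm_sq]
  rw [h]
  simp only [Nv, Pi.smul_apply, smul_eq_mul, map_mul, smul_smul]
  congr 1; ring

lemma uv_smul (n : ℕ) (a : ℂ) (x : Fin (n + 1) → ℂ) :
    uv n (a • x) = ((‖a‖ ^ 2 : ℝ) : ℂ) • uv n x := by
  have ht : (0 : ℝ) ≤ ‖a‖ ^ 2 := by positivity
  rw [uv, uv, Nv_smul]
  generalize ‖a‖ ^ 2 = t at ht
  rw [bil_smul_left, bil_smul_right, Complex.re_ofReal_mul, Complex.re_ofReal_mul, smul_add,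
    smul_smul]
  have : -(t * (t * (bil n (Nv n x) (Nv n x)).re)) = t ^ 2 * (-(bil n (Nv n x) (Nv n x)).re) := by
    ring
  rw [this, Real.sqrt_mul (sq_nonneg t), Real.sqrt_sq ht]
  push_cast
  rfl

/-- The family of transformations on projective space. -/
noncomputable def TT (n : ℕ) (x p : Projectivization ℂ (Fin (n + 1) → ℂ)) :
    Projectivization ℂ (Fin (n + 1) → ℂ) := pj n (Ru n (uv n x.rep) p.rep)

lemma TT_pj {n : ℕ} {x z : Fin (n + 1) → ℂ} (hx : x ≠ 0) (hz : z ≠ 0) :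
    TT n (pj n x) (pj n z) = pj n (Ru n (uv n x) z) := by
  obtain ⟨a, ha, h⟩ := rep_pj hx
  obtain ⟨b, hb, h'⟩ := rep_pj hz
  rw [TT, h, h', uv_smul, Ru_smul, map_smul, pj_smul, pj_smul hb]
  have : ‖a‖ ≠ 0 := norm_ne_zero_iff.mpr ha
  exact pow_ne_zero _ (by exact_mod_cast pow_ne_zero 2 this)

lemma continuous_Nv (n : ℕ) : Continuous (Nv n) := by
  have hc : Continuous (fun z : Fin (n + 1) → ℂ => conj (z (Fin.last n))) :=
    Complex.continuous_conj.comp (continuous_apply _)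
  unfold Nv; fun_prop

lemma continuous_uv (n : ℕ) : Continuous (uv n) := by
  have h := continuous_bil' (continuous_Nv n) (continuous_Nv n)
  have h' : Continuous fun x => (Real.sqrt (-(bil n (Nv n x) (Nv n x)).re) : ℂ) :=
    Complex.continuous_ofReal.comp
      (Real.continuous_sqrt.comp (Complex.continuous_re.comp h).neg)
  exact (continuous_Nv n).add (h'.smul continuous_const)

lemma continuous_Ru (n : ℕ) :
    Continuous (fun p : (Fin (n + 1) → ℂ) × (Fin (n + 1) → ℂ) => Ru n (uv n p.1) p.2) := by
  have hu : Continuous (fun p : (Fin (n + 1) → ℂ) × (Fin (n + 1) → ℂ) => uv n p.1) :=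
    (continuous_uv n).comp continuous_fst
  have h1 := continuous_bil' hu hu
  have h2 := continuous_bil' (n := n)
    (continuous_snd (X := Fin (n + 1) → ℂ) (Y := Fin (n + 1) → ℂ)) hu
  simp only [Ru_apply]
  fun_prop

open Filter Topology in
lemma TT_continuousAt {n : ℕ} {x z : Fin (n + 1) → ℂ} (hx : x ≠ 0) (hz : z ≠ 0)
    (hR : Ru n (uv n x) z ≠ 0) :
    ContinuousAt (fun p : Projectivization ℂ (Fin (n + 1) → ℂ) ×
      Projectivization ℂ (Fin (n + 1) → ℂ) => TT n p.1 p.2) (pj n x, pj n z) := by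
  rw [ContinuousAt, nhds_prod_eq, ← map_pj hx, ← map_pj hz, prod_map_map_eq, tendsto_map'_iff,
    TT_pj hx hz, ← map_pj hR, ← nhds_prod_eq]
  have h1 : Tendsto (fun p : (Fin (n + 1) → ℂ) × (Fin (n + 1) → ℂ) => pj n (Ru n (uv n p.1) p.2))
      (𝓝 (x, z)) (map (pj n) (𝓝 (Ru n (uv n x) z))) :=
    tendsto_map.comp (continuous_Ru n).continuousAt
  refine h1.congr' ?_
  have ho : {p : (Fin (n + 1) → ℂ) × (Fin (n + 1) → ℂ) | p.1 ≠ 0 ∧ p.2 ≠ 0} ∈ 𝓝 (x, z) := by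
    rw [nhds_prod_eq]
    exact prod_mem_prod (isOpen_ne.mem_nhds hx) (isOpen_ne.mem_nhds hz)
  filter_upwards [ho] with p hp
  exact (TT_pj hp.1 hp.2).symm

/-- Everything about the half turn attached to a real negative vector. -/
lemma uv_facts {n : ℕ} {x : Fin (n + 1) → ℂ} (hr : IsRealVec n x) (h : (bil n x x).re < 0) :
    IsRealVec n (uv n x) ∧ ∃ c : ℝ, c ≠ 0 ∧ bil n (uv n x) (uv n x) = c ∧
      ∃ d : ℂ, d ≠ 0 ∧ Ru n (uv n x) (eVec n) = d • x := by
  have hx : conjVec n x = x := hr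
  have hk := last_ne hr h
  have hkc : conj (x (Fin.last n)) = x (Fin.last n) := congrFun hr _
  obtain ⟨t, ht⟩ : ∃ t : ℝ, x (Fin.last n) = t :=
    ⟨_, (Complex.conj_eq_iff_re.mp hkc).symm⟩
  have ht0 : t ≠ 0 := fun h0 => hk (by rw [ht, h0]; rfl)
  obtain ⟨q, hq⟩ : ∃ q : ℝ, bil n x x = q := by
    refine ⟨_, (Complex.conj_eq_iff_re.mp ?_).symm⟩
    rw [← bil_conj, hx]
  rw [hq, Complex.ofReal_re] at h
  have hN : Nv n x = (t : ℂ) • x := by rw [Nv, hkc, ht]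
  have hNN : bil n (Nv n x) (Nv n x) = ((t ^ 2 * q : ℝ) : ℂ) := by
    rw [hN, bil_smul_left, bil_smul_right, hq]; push_cast; ring
  have hpos : 0 < -(t ^ 2 * q) := by
    have : 0 < t ^ 2 := by positivity
    nlinarith
  set s : ℝ := Real.sqrt (-(t ^ 2 * q)) with hs
  have hs0 : 0 < s := Real.sqrt_pos.mpr hpos
  have hs2 : s ^ 2 = -(t ^ 2 * q) := Real.sq_sqrt hpos.le
  have hu : uv n x = (t : ℂ) • x + (s : ℂ) • eVec n := by
    rw [uv, hNN, Complex.ofReal_re, hN]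
  have hxe : bil n x (eVec n) = -(t : ℂ) := by rw [bil_comm, bil_eVec, ht]
  have hex : bil n (eVec n) x = -(t : ℂ) := by rw [bil_eVec, ht]
  have hee : bil n (eVec n) (eVec n) = -1 := by rw [bil_eVec, eVec_last]
  have hs2c : (t : ℂ) ^ 2 * (q : ℂ) = - (s : ℂ) ^ 2 := by
    have : t ^ 2 * q = - s ^ 2 := by rw [hs2]; ring
    exact_mod_cast this
  have hc : bil n (uv n x) (uv n x) = ((-2 * s * (s + t ^ 2) : ℝ) : ℂ) := by
    rw [hu]
    simp only [bil_add_left, bil_add_right, bil_smul_left, bil_smul_right, hq, hxe, hex, hee]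
    push_cast
    linear_combination hs2c
  have hpos2 : 0 < s + t ^ 2 := by positivity
  refine ⟨?_, _, ?_, hc, ((-2 * (s + t ^ 2) * t : ℝ) : ℂ), ?_, ?_⟩
  · rw [IsRealVec, hu, conjVec_add, conjVec_smul, conjVec_smul, hx, conj_eVec]
    simp
  · exact mul_ne_zero (mul_ne_zero (by norm_num) hs0.ne') hpos2.ne'
  · exact_mod_cast mul_ne_zero (mul_ne_zero (by norm_num) hpos2.ne') ht0
  · rw [Ru_apply, hc, hu]
    simp only [bil_add_right, bil_smul_right, hex, hee]
    push_cast
    module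

lemma Wv_eVec_ne {n : ℕ} {z : Fin (n + 1) → ℂ} (hz : z ∈ DCone n) : Wv n z ≠ 0 :=
  ne_zero_of_neg (Wv_neg hz)

lemma DCone_ne {n : ℕ} {z : Fin (n + 1) → ℂ} (hz : z ∈ DCone n) : z ≠ 0 := by
  rintro rfl
  exact hz.1 (by simp [bil])

lemma Ru_ne {n : ℕ} {u z : Fin (n + 1) → ℂ} (hz : z ≠ 0) (hu : bil n u u ≠ 0) :
    Ru n u z ≠ 0 := by
  intro h
  have := Ru_Ru n u z
  rw [h, map_zero] at this
  exact smul_ne_zero (pow_ne_zero 2 hu) hz this.symm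

lemma OmegaCone_Ru {n : ℕ} {u z : Fin (n + 1) → ℂ} (hz : z ∈ OmegaCone n) (hur : IsRealVec n u)
    {c : ℝ} (hc : c ≠ 0) (hu : bil n u u = c) : Ru n u z ∈ OmegaCone n := by
  have hc' : (c : ℂ) ≠ 0 := by exact_mod_cast hc
  have hc2 : 0 < c ^ 2 := by positivity
  have hne : Ru n u z ≠ 0 := Ru_ne (DCone_ne (mem_DCone hz)) (hu ▸ hc')
  rcases hz with h | h
  · left
    refine ⟨hne, ?_⟩
    have h2 := h.2
    rw [fdet_eq] at h2 ⊢
    rw [← Ru_conj hur, Ru_bil, Ru_bil, hu, norm_mul, norm_pow, Complex.norm_real,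
      Real.norm_eq_abs, sq_abs, ← Complex.ofReal_pow, Complex.re_ofReal_mul, mul_pow, mul_pow,
      ← mul_sub]
    positivity
  · right
    refine ⟨hne, ?_, ?_⟩
    · rw [IsRealVec, ← Ru_conj hur, show conjVec n z = z from h.2.1]
    · have h2 := h.2.2
      rw [herm_eq] at h2 ⊢
      rw [← Ru_conj hur, Ru_bil, hu, ← Complex.ofReal_pow, Complex.re_ofReal_mul]
      exact mul_neg_of_pos_of_neg hc2 h2

lemma mem_Omega_iff {n : ℕ} {p : Projectivization ℂ (Fin (n + 1) → ℂ)} :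
    p ∈ OmegaSet n ↔ ∃ z ∈ OmegaCone n, p = pj n z := by
  constructor
  · rintro ⟨z, hz, h, rfl⟩
    exact ⟨z, h, (pj_mk hz).symm⟩
  · rintro ⟨z, h, rfl⟩
    have hz := DCone_ne (mem_DCone h)
    exact ⟨z, hz, h, (pj_mk hz).symm⟩

lemma mem_H_iff {n : ℕ} {p : Projectivization ℂ (Fin (n + 1) → ℂ)} :
    p ∈ HSet n ↔ ∃ z, IsRealVec n z ∧ (bil n z z).re < 0 ∧ p = pj n z := by
  constructor
  · rintro ⟨z, hz, h, h', rfl⟩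
    exact ⟨z, h, by rwa [← herm_real_s12 h], (pj_mk hz).symm⟩
  · rintro ⟨z, h, h', rfl⟩
    have hz := ne_zero_of_neg h'
    exact ⟨z, hz, h, by rwa [herm_real_s12 h], (pj_mk hz).symm⟩

lemma FF_mem {n : ℕ} {p : Projectivization ℂ (Fin (n + 1) → ℂ)} (hp : p ∈ OmegaSet n) :
    FF n p ∈ HSet n := by
  obtain ⟨z, hz, rfl⟩ := mem_Omega_iff.mp hp
  have hD := mem_DCone hz
  rw [FF_pj (DCone_ne hD)]
  exact mem_H_iff.mpr ⟨_, Wv_real z, Wv_neg hD, rfl⟩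

lemma FF_real {n : ℕ} {z : Fin (n + 1) → ℂ} (hr : IsRealVec n z) (h : (bil n z z).re < 0) :
    FF n (pj n z) = pj n z := by
  have hz := ne_zero_of_neg h
  have hk := last_ne hr h
  have hc : ∀ j, conj (z j) = z j := fun j => congrFun hr j
  obtain ⟨q, hq⟩ : ∃ q : ℝ, bil n z z = q := by
    refine ⟨_, (Complex.conj_eq_iff_re.mp ?_).symm⟩
    rw [← bil_conj, show conjVec n z = z from hr]
  have hq0 : q < 0 := by rwa [hq, Complex.ofReal_re] at h
  have : Wv n z = (-4 * (q : ℂ) * z (Fin.last n)) • z := by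
    funext j
    simp only [Wv, map_mul, hc, hq, Complex.conj_ofReal, Complex.norm_real, Real.norm_eq_abs,
      abs_of_neg hq0, Pi.smul_apply, smul_eq_mul]
    push_cast
    ring
  rw [FF_pj hz, this, pj_smul]
  refine mul_ne_zero (mul_ne_zero (by norm_num) ?_) hk
  exact_mod_cast hq0.ne

lemma TT_mem {n : ℕ} {x p : Projectivization ℂ (Fin (n + 1) → ℂ)} (hx : x ∈ HSet n)
    (hp : p ∈ OmegaSet n) : TT n x p ∈ OmegaSet n := by
  obtain ⟨z, hz, rfl⟩ := mem_Omega_iff.mp hp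
  obtain ⟨r, hr, hneg, rfl⟩ := mem_H_iff.mp hx
  obtain ⟨hur, c, hc, hcu, d, hd, hde⟩ := uv_facts hr hneg
  rw [TT_pj (ne_zero_of_neg hneg) (DCone_ne (mem_DCone hz))]
  exact mem_Omega_iff.mpr ⟨_, OmegaCone_Ru hz hur hc hcu, rfl⟩

lemma TT_TT {n : ℕ} {x p : Projectivization ℂ (Fin (n + 1) → ℂ)} (hx : x ∈ HSet n)
    (hp : p ∈ OmegaSet n) : TT n x (TT n x p) = p := by
  obtain ⟨z, hz, rfl⟩ := mem_Omega_iff.mp hp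
  obtain ⟨r, hr, hneg, rfl⟩ := mem_H_iff.mp hx
  obtain ⟨hur, c, hc, hcu, d, hd, hde⟩ := uv_facts hr hneg
  have hc' : (c : ℂ) ≠ 0 := by exact_mod_cast hc
  have hz0 := DCone_ne (mem_DCone hz)
  rw [TT_pj (ne_zero_of_neg hneg) hz0, TT_pj (ne_zero_of_neg hneg) (Ru_ne hz0 (hcu ▸ hc')),
    Ru_Ru, pj_smul]
  rw [hcu]; exact pow_ne_zero 2 hc'

lemma FF_TT {n : ℕ} {x p : Projectivization ℂ (Fin (n + 1) → ℂ)} (hx : x ∈ HSet n)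
    (hp : p ∈ OmegaSet n) : FF n (TT n x p) = TT n x (FF n p) := by
  obtain ⟨z, hz, rfl⟩ := mem_Omega_iff.mp hp
  obtain ⟨r, hr, hneg, rfl⟩ := mem_H_iff.mp hx
  obtain ⟨hur, c, hc, hcu, d, hd, hde⟩ := uv_facts hr hneg
  have hc' : (c : ℂ) ≠ 0 := by exact_mod_cast hc
  have hz0 := DCone_ne (mem_DCone hz)
  rw [TT_pj (ne_zero_of_neg hneg) hz0, FF_pj (Ru_ne hz0 (hcu ▸ hc')), FF_pj hz0,
    TT_pj (ne_zero_of_neg hneg) (Wv_eVec_ne (mem_DCone hz))]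
  exact equiv_general _ hc (Ru_conj hur) (fun v w => by rw [Ru_bil, hcu]) (mem_DCone hz)

lemma o_mem_H (n : ℕ) : oPoint n ∈ HSet n := by
  rw [oPoint_eq]
  refine mem_H_iff.mpr ⟨_, conj_eVec n, ?_, rfl⟩
  rw [bil_eVec, eVec_last]; simp

lemma H_sub_Omega {n : ℕ} {p : Projectivization ℂ (Fin (n + 1) → ℂ)} (hp : p ∈ HSet n) :
    p ∈ OmegaSet n := by
  obtain ⟨z, hz, h, h', rfl⟩ := hp
  exact ⟨z, hz, Or.inr ⟨hz, h, h'⟩, rfl⟩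

lemma TT_o {n : ℕ} {x : Projectivization ℂ (Fin (n + 1) → ℂ)} (hx : x ∈ HSet n) :
    TT n x (oPoint n) = x := by
  obtain ⟨r, hr, hneg, rfl⟩ := mem_H_iff.mp hx
  obtain ⟨hur, c, hc, hcu, d, hd, hde⟩ := uv_facts hr hneg
  rw [oPoint_eq, TT_pj (ne_zero_of_neg hneg) (eVec_ne n), hde, pj_smul hd]

lemma TT_self {n : ℕ} {x : Projectivization ℂ (Fin (n + 1) → ℂ)} (hx : x ∈ HSet n) :
    TT n x x = oPoint n := by
  have := TT_TT hx (H_sub_Omega (o_mem_H n))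
  rwa [TT_o hx] at this

lemma FF_cont {n : ℕ} {p : Projectivization ℂ (Fin (n + 1) → ℂ)} (hp : p ∈ OmegaSet n) :
    ContinuousAt (FF n) p := by
  obtain ⟨z, hz, rfl⟩ := mem_Omega_iff.mp hp
  exact FF_continuousAt (DCone_ne (mem_DCone hz)) (Wv_eVec_ne (mem_DCone hz))

lemma TT_cont {n : ℕ} {x p : Projectivization ℂ (Fin (n + 1) → ℂ)} (hx : x ∈ HSet n)
    (hp : p ∈ OmegaSet n) :
    ContinuousAt (fun p : Projectivization ℂ (Fin (n + 1) → ℂ) ×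
      Projectivization ℂ (Fin (n + 1) → ℂ) => TT n p.1 p.2) (x, p) := by
  obtain ⟨z, hz, rfl⟩ := mem_Omega_iff.mp hp
  obtain ⟨r, hr, hneg, rfl⟩ := mem_H_iff.mp hx
  obtain ⟨hur, c, hc, hcu, d, hd, hde⟩ := uv_facts hr hneg
  have hc' : (c : ℂ) ≠ 0 := by exact_mod_cast hc
  have hz0 := DCone_ne (mem_DCone hz)
  have hR := Ru_ne hz0 (hcu ▸ hc')
  exact TT_continuousAt (ne_zero_of_neg hneg) hz0 hR

/-- The projection on `Ω`. -/
noncomputable def PP (n : ℕ) (p : ↥(OmegaSet n)) : Projectivization ℂ (Fin (n + 1) → ℂ) :=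
  FF n p.1

/-- The global trivialization. -/
noncomputable def triv (n : ℕ) :
    ↥(PP n ⁻¹' HSet n) ≃ₜ ↥(HSet n) × ↥(PP n ⁻¹' {oPoint n}) where
  toFun p := (⟨FF n p.1.1, p.2⟩, ⟨⟨TT n (FF n p.1.1) p.1.1, TT_mem p.2 p.1.2⟩, by
    change FF n (TT n (FF n p.1.1) p.1.1) = oPoint n
    exact (FF_TT p.2 p.1.2).trans (TT_self p.2)⟩)
  invFun y := ⟨⟨TT n y.1.1 y.2.1.1, TT_mem y.1.2 y.2.1.2⟩, FF_mem (TT_mem y.1.2 y.2.1.2)⟩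
  left_inv p := by
    apply Subtype.ext; apply Subtype.ext
    exact TT_TT p.2 p.1.2
  right_inv y := by
    have ho : FF n y.2.1.1 = oPoint n := y.2.2
    have h1 : FF n (TT n y.1.1 y.2.1.1) = y.1.1 := by
      rw [FF_TT y.1.2 y.2.1.2, ho, TT_o y.1.2]
    apply Prod.ext
    · exact Subtype.ext h1
    · apply Subtype.ext; apply Subtype.ext
      change TT n (FF n (TT n y.1.1 y.2.1.1)) (TT n y.1.1 y.2.1.1) = y.2.1.1
      rw [h1, TT_TT y.1.2 y.2.1.2]
  continuous_toFun := by
    have hv : Continuous (fun p : ↥(PP n ⁻¹' HSet n) => p.1.1) :=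
      continuous_subtype_val.comp continuous_subtype_val
    have hF : Continuous (fun p : ↥(PP n ⁻¹' HSet n) => FF n p.1.1) :=
      continuous_iff_continuousAt.mpr fun p =>
        ContinuousAt.comp (g := FF n) (FF_cont p.1.2) hv.continuousAt
    refine Continuous.prodMk (hF.subtype_mk _) ?_
    refine Continuous.subtype_mk (Continuous.subtype_mk ?_ _) _
    exact continuous_iff_continuousAt.mpr fun p =>
      ContinuousAt.comp (f := fun p : ↥(PP n ⁻¹' HSet n) => (FF n p.1.1, p.1.1))
        (TT_cont p.2 p.1.2) (hF.prodMk hv).continuousAt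
  continuous_invFun := by
    refine Continuous.subtype_mk (Continuous.subtype_mk ?_ _) _
    have hv : Continuous (fun y : ↥(HSet n) × ↥(PP n ⁻¹' {oPoint n}) => (y.1.1, y.2.1.1)) := by
      fun_prop
    exact continuous_iff_continuousAt.mpr fun y =>
      ContinuousAt.comp (f := fun y : ↥(HSet n) × ↥(PP n ⁻¹' {oPoint n}) => (y.1.1, y.2.1.1))
        (TT_cont y.1.2 y.2.1.2) hv.continuousAt

open Matrix in
lemma matrix_bil {n : ℕ} (A : Matrix (Fin (n + 1)) (Fin (n + 1)) ℝ)
    (hA : Aᵀ * (Matrix.diagonal fun j => if j = Fin.last n then (-1 : ℝ) else 1) * A =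
          (Matrix.diagonal fun j => if j = Fin.last n then (-1 : ℝ) else 1))
    (v w : Fin (n + 1) → ℂ) :
    bil n ((A.map Complex.ofReal).mulVec v) ((A.map Complex.ofReal).mulVec w) = bil n v w := by
  set J : Matrix (Fin (n + 1)) (Fin (n + 1)) ℝ :=
    Matrix.diagonal fun j => if j = Fin.last n then (-1 : ℝ) else 1 with hJ
  have hb : ∀ v w, bil n v w = v ⬝ᵥ ((J.map Complex.ofReal) *ᵥ w) := by
    intro v w
    have : J.map Complex.ofReal = Matrix.diagonal
        fun j => if j = Fin.last n then (-1 : ℂ) else 1 := by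
      rw [hJ, Matrix.diagonal_map (by simp)]
      congr 1; funext j; split_ifs <;> simp
    rw [this]
    simp [bil, dotProduct, Matrix.mulVec_diagonal, Fin.sum_univ_castSucc, Fin.castSucc_ne_last,
      sub_eq_add_neg]
  have hA' : (A.map Complex.ofReal)ᵀ * J.map Complex.ofReal * A.map Complex.ofReal =
      J.map Complex.ofReal := by
    have h := congrArg (fun M => M.map Complex.ofRealHom) hA
    simp only [Matrix.map_mul] at h
    exact h
  rw [hb, hb, Matrix.mulVec_mulVec, Matrix.dotProduct_mulVec, ← Matrix.vecMul_transpose,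
    Matrix.vecMul_vecMul, ← Matrix.mul_assoc, hA', ← Matrix.dotProduct_mulVec]

lemma matrix_conj {n : ℕ} (A : Matrix (Fin (n + 1)) (Fin (n + 1)) ℝ) (v : Fin (n + 1) → ℂ) :
    (A.map Complex.ofReal).mulVec (conjVec n v) = conjVec n ((A.map Complex.ofReal).mulVec v) := by
  funext j
  simp [conjVec, Matrix.mulVec, dotProduct]

open Matrix in
/-- (Theorem 1 / `teo:uno`): there is a map `Π : Ω → ℙ_ℂⁿ` given on the cone by
`z ↦ conj(η)z + η z̄` (with `η² = −⟨z,z̄⟩`) and the identity on `H_ℝⁿ`, whose image is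
exactly `H_ℝⁿ`, which is `SO₊(n,1)`-equivariant, and which is a locally trivial fibre
bundle over `H_ℝⁿ` with fibre the Lagrangian `Π⁻¹(o)`. -/
theorem omega_fibre_bundle (n : ℕ) (hn : 2 < n) :
    ∃ P : ↥(OmegaSet n) → Projectivization ℂ (Fin (n + 1) → ℂ),
      -- (i)
      (∀ (z : Fin (n + 1) → ℂ) (hz : z ≠ 0) (hf : 0 < fdet n z) (η : ℂ),
        η ^ 2 = -herm n z (conjVec n z) →
        ∃ hw : conj η • z + η • conjVec n z ≠ 0,
          P ⟨Projectivization.mk ℂ z hz, z, hz, Or.inl ⟨hz, hf⟩, rfl⟩ =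
            Projectivization.mk ℂ (conj η • z + η • conjVec n z) hw) ∧
      -- (ii)
      (∀ (z : Fin (n + 1) → ℂ) (hz : z ≠ 0) (hre : IsRealVec n z)
        (hneg : (herm n z z).re < 0),
        P ⟨Projectivization.mk ℂ z hz, z, hz, Or.inr ⟨hz, hre, hneg⟩, rfl⟩ =
          Projectivization.mk ℂ z hz) ∧
      -- (iii)
      Set.range P = HSet n ∧
      -- (iv) equivariance
      (∀ A : Matrix (Fin (n + 1)) (Fin (n + 1)) ℝ,
        Aᵀ * (Matrix.diagonal fun j => if j = Fin.last n then (-1 : ℝ) else 1) * A =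
          (Matrix.diagonal fun j => if j = Fin.last n then (-1 : ℝ) else 1) →
        ∀ (z : Fin (n + 1) → ℂ) (hz : z ≠ 0) (hzΩ : z ∈ OmegaCone n)
          (hAz : (A.map Complex.ofReal).mulVec z ≠ 0)
          (hAzΩ : (A.map Complex.ofReal).mulVec z ∈ OmegaCone n)
          (v : Fin (n + 1) → ℂ) (hv : v ≠ 0)
          (hAv : (A.map Complex.ofReal).mulVec v ≠ 0),
          P ⟨Projectivization.mk ℂ z hz, z, hz, hzΩ, rfl⟩ = Projectivization.mk ℂ v hv →
          P ⟨Projectivization.mk ℂ ((A.map Complex.ofReal).mulVec z) hAz,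
              (A.map Complex.ofReal).mulVec z, hAz, hAzΩ, rfl⟩ =
            Projectivization.mk ℂ ((A.map Complex.ofReal).mulVec v) hAv) ∧
      -- (v) local triviality
      (∀ x ∈ HSet n,
        ∃ U : Set (Projectivization ℂ (Fin (n + 1) → ℂ)),
          x ∈ U ∧ U ⊆ HSet n ∧
          IsOpen ((Subtype.val : ↥(HSet n) → Projectivization ℂ (Fin (n + 1) → ℂ)) ⁻¹' U) ∧
          ∃ φ : ↥(P ⁻¹' U) ≃ₜ ↥U × ↥(P ⁻¹' {oPoint n}),
            ∀ p : ↥(P ⁻¹' U),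
              ((φ p).1 : Projectivization ℂ (Fin (n + 1) → ℂ)) = P p.1) := by
  refine ⟨PP n, ?_, ?_, ?_, ?_, ?_⟩
  · intro z hz hf η hη
    rw [herm_conj_eq] at hη
    have hD := mem_DCone_of_fdet hf
    have hneg := wv_neg hη hD
    have hw : wv n η z ≠ 0 := ne_zero_of_neg hneg
    refine ⟨hw, ?_⟩
    change FF n (Projectivization.mk ℂ z hz) = Projectivization.mk ℂ (wv n η z) hw
    rw [← pj_mk hz, ← pj_mk hw, FF_pj hz, Wv_eq hη, pj_smul (last_ne (wv_real _ _ _) hneg)]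
  · intro z hz hre hneg
    change FF n (Projectivization.mk ℂ z hz) = Projectivization.mk ℂ z hz
    rw [herm_real_s12 hre] at hneg
    rw [← pj_mk hz, FF_real hre hneg]
  · ext p
    constructor
    · rintro ⟨q, rfl⟩
      exact FF_mem q.2
    · intro hp
      refine ⟨⟨p, H_sub_Omega hp⟩, ?_⟩
      obtain ⟨z, hr, hneg, rfl⟩ := mem_H_iff.mp hp
      exact FF_real hr hneg
  · intro A hA z hz hzΩ hAz hAzΩ v hv hAv h
    change FF n (Projectivization.mk ℂ z hz) = Projectivization.mk ℂ v hv at h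
    change FF n (Projectivization.mk ℂ _ hAz) = Projectivization.mk ℂ _ hAv
    have hD := mem_DCone hzΩ
    rw [← pj_mk hz, ← pj_mk hv, FF_pj hz] at h
    rw [← pj_mk hAz, ← pj_mk hAv, FF_pj hAz]
    obtain ⟨a, ha, hva⟩ := pj_eq (Wv_eVec_ne hD) hv h
    have key := equiv_general (Matrix.mulVecLin (A.map Complex.ofReal)) (c := 1) one_ne_zero
      (fun v => matrix_conj A v) (fun v w => by
        simp only [Matrix.mulVecLin_apply]
        rw [matrix_bil A hA]; simp) hD
    rw [hva, map_smul, pj_smul ha] at key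
    exact key
  · intro x hx
    refine ⟨HSet n, hx, subset_rfl, ?_, triv n, fun p => rfl⟩
    rw [Subtype.coe_preimage_self]
    exact isOpen_univ
end

section
/- Let z ∈ ℂ^{n+1} with f(z) > 0 and let η ∈ ℂ satisfy η² = −⟨z,z̄⟩. Set w = conj(η)·z + η·z̄. Then η ≠ 0, w is a real vector (w = w̄), and ⟨w,w⟩ = 2|η|²·(⟨z,z⟩ − |η|²) < 0; in particular w is a nonzero negative vector. -/
open scoped ComplexConjugate

theorem herm_mid_expand (n : ℕ) (z : Fin (n + 1) → ℂ) (a b : ℂ) :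
    herm n (a • z + b • conjVec n z) (a • z + b • conjVec n z) =
      a * conj a * herm n z z + a * conj b * herm n z (conjVec n z)
        + b * conj a * conj (herm n z (conjVec n z)) + b * conj b * conj (herm n z z) := by
  simp only [herm, conjVec, Pi.add_apply, Pi.smul_apply, smul_eq_mul, map_add, map_mul, map_sub,
    map_sum, Complex.conj_conj, mul_sub, Finset.mul_sum]
  have h : ∀ j : Fin n, (a * z j.castSucc + b * conj (z j.castSucc)) *
      (conj a * conj (z j.castSucc) + conj b * z j.castSucc) =
      a * conj a * (z j.castSucc * conj (z j.castSucc)) + a * conj b * (z j.castSucc * z j.castSucc)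
      + b * conj a * (conj (z j.castSucc) * conj (z j.castSucc))
      + b * conj b * (conj (z j.castSucc) * z j.castSucc) := fun j => by ring
  simp only [h, Finset.sum_add_distrib]
  ring

/-- (Lemma 3.12): For `z` with `f(z) > 0` and `η` with `η² = −⟨z,z̄⟩`, the vector
`w = conj(η)·z + η·z̄` satisfies: `η ≠ 0`, `w` is real, and
`⟨w,w⟩ = 2|η|²(⟨z,z⟩ − |η|²) < 0`; in particular `w` is a nonzero negative vector. -/
theorem midpoint_vector_negative (n : ℕ) (hn : 1 ≤ n) (z : Fin (n + 1) → ℂ)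
    (hf : 0 < fdet n z) (η : ℂ) (hη : η ^ 2 = -herm n z (conjVec n z)) :
    η ≠ 0 ∧
    IsRealVec n (conj η • z + η • conjVec n z) ∧
    (herm n (conj η • z + η • conjVec n z) (conj η • z + η • conjVec n z)).re =
      2 * Complex.normSq η * ((herm n z z).re - Complex.normSq η) ∧
    (herm n (conj η • z + η • conjVec n z) (conj η • z + η • conjVec n z)).re < 0 ∧
    conj η • z + η • conjVec n z ≠ 0 := by
  have hH : herm n z (conjVec n z) = -η ^ 2 := by rw [hη, neg_neg]
  have hN : Complex.normSq (herm n z (conjVec n z)) = Complex.normSq η ^ 2 := by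
    rw [hH, Complex.normSq_neg, map_pow]
  have hf' : ((herm n z z).re) ^ 2 < Complex.normSq η ^ 2 := by
    rw [fdet, hN] at hf
    linarith
  have h0 : 0 ≤ Complex.normSq η := Complex.normSq_nonneg η
  have hlt : (herm n z z).re < Complex.normSq η := lt_of_pow_lt_pow_left₀ 2 h0 hf'
  have hpos : 0 < Complex.normSq η := by
    rcases h0.lt_or_eq with h | h
    · exact h
    · rw [← h] at hf'
      nlinarith [sq_nonneg (herm n z z).re]
  have hE : (herm n (conj η • z + η • conjVec n z) (conj η • z + η • conjVec n z)).re =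
      2 * Complex.normSq η * ((herm n z z).re - Complex.normSq η) := by
    rw [herm_mid_expand, hH]
    simp [Complex.normSq_apply, pow_two]
    ring
  have hneg : (herm n (conj η • z + η • conjVec n z) (conj η • z + η • conjVec n z)).re < 0 := by
    rw [hE]
    exact mul_neg_of_pos_of_neg (by linarith) (by linarith)
  refine ⟨Complex.normSq_pos.mp hpos, ?_, hE, hneg, ?_⟩
  · funext j
    simp [conjVec, add_comm]
  · intro h
    rw [h] at hneg
    simp [herm] at hneg
end

section
/- Let z ∈ ℂ^{n+1} be a positive vector (⟨z,z⟩ > 0) such that z and z̄ are linearly independent over ℂ and f(z) = 0 (i.e. the plane span_ℂ{z,z̄} is parabolic). Let η ∈ ℂ satisfy η² = −⟨z,z̄⟩ and set w = conj(η)·z + η·z̄. Then |η|² = ⟨z,z⟩ and ⟨z,w⟩ = 0 and ⟨z̄,w⟩ = 0; i.e. w lies in the intersection of the orthogonal hyperplanes of z and of z̄. -/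
open scoped ComplexConjugate

theorem herm_comb (n : ℕ) (u z w : Fin (n + 1) → ℂ) (a b : ℂ) :
    herm n u (a • z + b • w) = conj a * herm n u z + conj b * herm n u w := by
  simp only [herm, Pi.add_apply, Pi.smul_apply, smul_eq_mul, map_add, map_mul, mul_sub,
    Finset.mul_sum]
  have : ∀ j : Fin n, u j.castSucc * (conj a * conj (z j.castSucc) + conj b * conj (w j.castSucc))
      = conj a * (u j.castSucc * conj (z j.castSucc))
        + conj b * (u j.castSucc * conj (w j.castSucc)) := fun j => by ring
  simp only [this, Finset.sum_add_distrib]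
  ring

theorem herm_symm (n : ℕ) (z w : Fin (n + 1) → ℂ) : conj (herm n z w) = herm n w z := by
  simp [herm, mul_comm]

theorem herm_conj (n : ℕ) (z : Fin (n + 1) → ℂ) :
    herm n (conjVec n z) (conjVec n z) = herm n z z := by
  simp [herm, conjVec, mul_comm]

/-- (Lemma 3.17): If `z` is a positive vector with `z, z̄` linearly independent and
`f(z) = 0` (the plane `span{z,z̄}` is parabolic), and `η² = −⟨z,z̄⟩`, then
`|η|² = ⟨z,z⟩` and `w = conj(η)·z + η·z̄` is orthogonal to both `z` and `z̄`. -/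
theorem midpoint_in_orth (n : ℕ) (hn : 1 ≤ n) (z : Fin (n + 1) → ℂ)
    (hpos : 0 < (herm n z z).re)
    (hind : LinearIndependent ℂ ![z, conjVec n z])
    (hf : fdet n z = 0) (η : ℂ) (hη : η ^ 2 = -herm n z (conjVec n z)) :
    Complex.normSq η = (herm n z z).re ∧
    herm n z (conj η • z + η • conjVec n z) = 0 ∧
    herm n (conjVec n z) (conj η • z + η • conjVec n z) = 0 := by
  have hN : Complex.normSq η = (herm n z z).re := by
    have h1 : Complex.normSq η ^ 2 = (herm n z z).re ^ 2 := by
      rw [← map_pow, hη, Complex.normSq_neg]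
      unfold fdet at hf
      linarith
    exact (pow_left_inj₀ (Complex.normSq_nonneg _) hpos.le two_ne_zero).1 h1
  have hz : herm n z z = η * conj η := by
    rw [Complex.mul_conj, hN]
    exact (Complex.conj_eq_iff_re.1 (herm_symm n z z)).symm
  have hb : herm n z (conjVec n z) = -η ^ 2 := by rw [hη, neg_neg]
  have hc : herm n (conjVec n z) z = -(conj η) ^ 2 := by
    rw [← herm_symm, hb]; simp
  refine ⟨hN, ?_, ?_⟩
  · rw [herm_comb, hz, hb, Complex.conj_conj]; ring
  · rw [herm_comb, herm_conj, hz, hc, Complex.conj_conj]; ring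
end

section
/- Let z = (z₁,…,z_{n+1}) ∈ ℂ^{n+1} with f(z) > 0, let η ∈ ℂ satisfy η² = −⟨z,z̄⟩, and suppose conj(η)·z + η·z̄ = λ·e_{n+1} for some λ ∈ ℂ, where e_{n+1} = (0,…,0,1). Then z_{n+1} ≠ 0 and, for every 1 ≤ j ≤ n, the quotient z_j / z_{n+1} is purely imaginary (equivalently, Re(z_j·conj(z_{n+1})) = 0). -/
open scoped ComplexConjugate

/-- (Lemma 3.13, fibre over the origin): If `f(z) > 0`, `η² = −⟨z,z̄⟩`, and
`conj(η)·z + η·z̄` is a multiple of `e_{n+1} = (0,…,0,1)`, then `z_{n+1} ≠ 0` and each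
quotient `z_j / z_{n+1}` (for `1 ≤ j ≤ n`) is purely imaginary, i.e.
`Re(z_j · conj(z_{n+1})) = 0`. -/
theorem fibre_over_origin (n : ℕ) (hn : 2 ≤ n) (z : Fin (n + 1) → ℂ)
    (hf : 0 < fdet n z) (η : ℂ) (hη : η ^ 2 = -herm n z (conjVec n z)) (lam : ℂ)
    (hw : conj η • z + η • conjVec n z = lam • (Pi.single (Fin.last n) 1 : Fin (n + 1) → ℂ)) :
    z (Fin.last n) ≠ 0 ∧
    ∀ j : Fin n, (z j.castSucc * conj (z (Fin.last n))).re = 0 := by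
  have hj : ∀ j : Fin n, conj η * z j.castSucc + η * conj (z j.castSucc) = 0 := by
    intro j
    have h := congrFun hw j.castSucc
    have hne : j.castSucc ≠ Fin.last n := (Fin.castSucc_lt_last j).ne
    simpa [conjVec, Pi.single_eq_of_ne hne] using h
  clear hw
  set c := z (Fin.last n) with hc
  set S : ℝ := ∑ j : Fin n, Complex.normSq (z j.castSucc) with hS
  set N : ℝ := Complex.normSq η with hN
  have hNc : η * conj η = (N : ℂ) := Complex.mul_conj η
  have hherm : herm n z z = ((S - Complex.normSq c : ℝ) : ℂ) := by
    unfold herm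
    simp only [Complex.mul_conj, hS]
    push_cast
    rfl
  have hA : (∑ j : Fin n, z j.castSucc * z j.castSucc) * conj η = -(η * (S : ℂ)) := by
    rw [hS, Finset.sum_mul]
    push_cast
    rw [Finset.mul_sum, ← Finset.sum_neg_distrib]
    refine Finset.sum_congr rfl fun j _ => ?_
    rw [← Complex.mul_conj]
    linear_combination z j.castSucc * hj j
  have hB : (∑ j : Fin n, z j.castSucc * z j.castSucc) - c * c = -η ^ 2 := by
    rw [hη]
    simp [herm, conjVec, hc]
  have hN2 : Complex.normSq (herm n z (conjVec n z)) = N ^ 2 := by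
    have : herm n z (conjVec n z) = -(η ^ 2) := by rw [hη]; ring
    rw [this, Complex.normSq_neg, map_pow]
  have hf' : (S - Complex.normSq c) ^ 2 < N ^ 2 := by
    unfold fdet at hf
    rw [hN2, hherm, Complex.ofReal_re] at hf
    linarith
  have hN0 : 0 ≤ N := Complex.normSq_nonneg η
  have hNpos : 0 < N := by
    rcases hN0.eq_or_lt with h | h
    · rw [← h] at hf'
      nlinarith [sq_nonneg (S - Complex.normSq c)]
    · exact h
  have hc2 : (c * conj η) ^ 2 = ((N * (N - S) : ℝ) : ℂ) := by
    push_cast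
    linear_combination conj η * hA - (conj η) ^ 2 * hB + (η * conj η + N - S) * hNc
  have hcN : (Complex.normSq c) ^ 2 = (N - S) ^ 2 := by
    have h := congrArg Complex.normSq hc2
    rw [map_pow, map_mul, Complex.normSq_conj, Complex.normSq_ofReal, ← hN] at h
    have h2 : N ^ 2 * (Complex.normSq c) ^ 2 = N ^ 2 * (N - S) ^ 2 := by linarith
    exact mul_left_cancel₀ (by positivity) h2
  have hc0 : 0 ≤ Complex.normSq c := Complex.normSq_nonneg c
  have hSN : S < N := by
    by_contra hcon
    push Not at hcon
    have : Complex.normSq c = S - N := by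
      rw [← abs_of_nonneg hc0, ← abs_of_nonneg (sub_nonneg.2 hcon), abs_sub_comm S N]
      exact (sq_eq_sq_iff_abs_eq_abs _ _).1 hcN
    rw [this] at hf'
    nlinarith
  have hpos : 0 < N * (N - S) := mul_pos hNpos (sub_pos.2 hSN)
  refine ⟨?_, ?_⟩
  · intro h0
    rw [h0] at hcN
    simp at hcN
    have := pow_pos (sub_pos.2 hSN) 2
    linarith
  · have him : (c * conj η).im = 0 := by
      have h1 := congrArg Complex.re hc2
      have h2 := congrArg Complex.im hc2
      rw [pow_two, Complex.mul_re, Complex.ofReal_re] at h1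
      rw [pow_two, Complex.mul_im, Complex.ofReal_im] at h2
      have h3 : (c * conj η).re * (c * conj η).im = 0 := by linarith
      rcases mul_eq_zero.1 h3 with h | h
      · rw [h] at h1
        nlinarith [sq_nonneg (c * conj η).im]
      · exact h
    intro j
    have h1 := congrArg Complex.re (hj j)
    simp only [Complex.add_re, Complex.mul_re, Complex.conj_re, Complex.conj_im,
      Complex.zero_re] at h1
    simp only [Complex.mul_im, Complex.conj_re, Complex.conj_im] at him
    have hNe : N = η.re * η.re + η.im * η.im := Complex.normSq_apply η
    have key : N * (z j.castSucc * conj c).re = 0 := by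
      rw [hNe]
      simp only [Complex.mul_re, Complex.conj_re, Complex.conj_im]
      linear_combination (c.re * η.re + c.im * η.im) / 2 * h1 +
        ((z j.castSucc).im * η.re - (z j.castSucc).re * η.im) * him
    exact (mul_eq_zero.1 key).resolve_left hNpos.ne'
end

section
/- Let 2 ≤ m < n. Let Q̃ : ℂ^{n+1} → ℂ^{m+1} be the ℂ-linear map (z₁,…,z_{n+1}) ↦ (z₁,…,z_m,z_{n+1}), and equip ℂ^{m+1} with the Hermitian form ⟨v,u⟩_m = v₁·conj(u₁) + ⋯ + v_m·conj(u_m) − v_{m+1}·conj(u_{m+1}) of signature (m,1); let T = {v ∈ ℂ^{m+1} \ {0} : v real and ⟨v,v⟩_m = 0}. Then for every z ∈ ℂ^{n+1} \ {0}: there exists w ∈ S_m with ⟨z,w⟩ = 0 if and only if (Q̃z = 0, or there exists v ∈ T with ⟨Q̃z, v⟩_m = 0). Equivalently, the cone over the Kulkarni limit set Λ equals the union of the kernel cone of Q̃ and the Q̃-preimage of the cone over Λ_{(m)}, and the cone over Ω = ℙ_ℂⁿ \ Λ equals the Q̃-preimage of the cone over Ω_{(m)} = ℙ_ℂᵐ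 \ Λ_{(m)}. -/
open scoped ComplexConjugate

/-- The projection `Q̃ : ℂ^{n+1} → ℂ^{m+1}`, `(z₁,…,z_{n+1}) ↦ (z₁,…,z_m,z_{n+1})`. -/
def Qt (m n : ℕ) (h : m ≤ n) (z : Fin (n + 1) → ℂ) : Fin (m + 1) → ℂ :=
  fun j => if hj : (j : ℕ) < m then z ⟨(j : ℕ), by omega⟩ else z (Fin.last n)

/-- The cone over the real `(m−1)`-sphere `∂H_ℝᵐ ⊂ ℙ_ℂⁿ`: nonzero real null vectors whose
coordinates `w_{m+1}, …, w_n` (0-based indices `m, …, n−1`) vanish. -/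
def SmCone (m n : ℕ) : Set (Fin (n + 1) → ℂ) :=
  {w | w ≠ 0 ∧ IsRealVec n w ∧
    (∀ j : Fin (n + 1), m ≤ (j : ℕ) → (j : ℕ) < n → w j = 0) ∧ herm n w w = 0}

theorem herm_Qt_of_mid (m n : ℕ) (h : m ≤ n) (z w : Fin (n + 1) → ℂ)
    (hw : ∀ j : Fin (n + 1), m ≤ (j : ℕ) → (j : ℕ) < n → w j = 0) :
    herm n z w = herm m (Qt m n h z) (Qt m n h w) := by
  obtain ⟨k, rfl⟩ := Nat.exists_eq_add_of_le h
  unfold herm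
  rw [Fin.sum_univ_add]
  have h2 : ∑ i : Fin k, z (Fin.natAdd m i).castSucc * conj (w (Fin.natAdd m i).castSucc) = 0 := by
    apply Finset.sum_eq_zero
    intro i _
    rw [hw _ (by simp) (by simp)]
    simp
  rw [h2, add_zero]
  congr 1
  · apply Finset.sum_congr rfl
    intro i _
    simp [Qt]
    rfl
  · simp [Qt]

/-- Extension by zero, a section of `Qt`. -/
def extVec (m n : ℕ) (v : Fin (m + 1) → ℂ) : Fin (n + 1) → ℂ :=
  fun j => if hj : (j : ℕ) < m then v ⟨(j : ℕ), by omega⟩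
    else if (j : ℕ) < n then 0 else v (Fin.last m)

theorem Qt_extVec (m n : ℕ) (h : m ≤ n) (v : Fin (m + 1) → ℂ) :
    Qt m n h (extVec m n v) = v := by
  funext j
  by_cases hj : (j : ℕ) < m
  · simp [Qt, extVec, hj]
  · have : j = Fin.last m := Fin.ext (by simp; omega)
    subst this
    simp [Qt, extVec, h]

theorem extVec_mid (m n : ℕ) (v : Fin (m + 1) → ℂ) (j : Fin (n + 1))
    (h1 : m ≤ (j : ℕ)) (h2 : (j : ℕ) < n) : extVec m n v j = 0 := by
  simp [extVec, h2, Nat.not_lt.mpr h1]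

theorem extVec_mem (m n : ℕ) (h : m ≤ n) (v : Fin (m + 1) → ℂ) (hv : v ∈ Scone m) :
    extVec m n v ∈ SmCone m n := by
  obtain ⟨h0, hr, hn⟩ := hv
  refine ⟨?_, ?_, extVec_mid m n v, ?_⟩
  · intro he
    apply h0
    rw [← Qt_extVec m n h v, he]
    funext j
    simp [Qt]
  · funext j
    have hr' : ∀ i, conj (v i) = v i := fun i => congrFun hr i
    simp only [conjVec, extVec]
    split_ifs <;> simp [hr']
  · rw [herm_Qt_of_mid m n h _ _ (extVec_mid m n v), Qt_extVec, hn]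

theorem Qt_mem (m n : ℕ) (h : m ≤ n) (w : Fin (n + 1) → ℂ) (hw : w ∈ SmCone m n) :
    Qt m n h w ∈ Scone m := by
  obtain ⟨h0, hr, hmid, hn⟩ := hw
  refine ⟨?_, ?_, ?_⟩
  · intro he
    apply h0
    funext j
    by_cases h1 : (j : ℕ) < m
    · have := congrFun he ⟨j, by omega⟩
      simpa [Qt, h1] using this
    · by_cases h2 : (j : ℕ) < n
      · exact hmid j (by omega) h2
      · have h3 : j = Fin.last n := Fin.ext (by simp; omega)
        have := congrFun he (Fin.last m)
        rw [h3]
        simpa [Qt] using this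
  · have hr' : ∀ i, conj (w i) = w i := fun i => congrFun hr i
    funext j
    simp only [conjVec, Qt]
    split_ifs <;> simp [hr']
  · rw [← herm_Qt_of_mid m n h _ _ hmid, hn]

theorem Scone_nonempty (m : ℕ) (hm : 2 ≤ m) : ∃ v, v ∈ Scone m := by
  obtain ⟨k, rfl⟩ : ∃ k, m = k + 1 := ⟨m - 1, by omega⟩
  refine ⟨fun j => if j = 0 ∨ j = Fin.last (k + 1) then 1 else 0, ?_, ?_, ?_⟩
  · intro he
    have := congrFun he 0
    simp at this
  · funext j
    simp only [conjVec]
    split_ifs <;> simp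
  · have hl : ∀ i : Fin (k + 1), i.castSucc ≠ Fin.last (k + 1) := fun i => (Fin.castSucc_lt_last i).ne
    simp [herm, hl]

theorem key_iff (m n : ℕ) (hm : 2 ≤ m) (h : m ≤ n) (z : Fin (n + 1) → ℂ) :
    (∃ w ∈ SmCone m n, herm n z w = 0) ↔
        (Qt m n h z = 0 ∨ ∃ v ∈ Scone m, herm m (Qt m n h z) v = 0) := by
  have back : (∃ v ∈ Scone m, herm m (Qt m n h z) v = 0) →
      ∃ w ∈ SmCone m n, herm n z w = 0 := by
    rintro ⟨v, hv, hz⟩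
    refine ⟨extVec m n v, extVec_mem m n h v hv, ?_⟩
    rw [herm_Qt_of_mid m n h _ _ (extVec_mid m n v), Qt_extVec, hz]
  constructor
  · rintro ⟨w, hw, hz⟩
    right
    refine ⟨Qt m n h w, Qt_mem m n h w hw, ?_⟩
    rw [← herm_Qt_of_mid m n h _ _ hw.2.2.1, hz]
  · rintro (h0 | hv)
    · obtain ⟨v, hv⟩ := Scone_nonempty m hm
      exact back ⟨v, hv, by rw [h0]; simp [herm]⟩
    · exact back hv

/-- (Lemma 5.2 / `le:19`, cone version): the cone over `Λ` is the union of the kernel cone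
of `Q̃` and the `Q̃`-preimage of the cone over `Λ_{(m)}`, and the cone over `Ω` is the
`Q̃`-preimage of the cone over `Ω_{(m)}`. -/
theorem lambdaCone_eq_preimage (m n : ℕ) (hm : 2 ≤ m) (hmn : m < n) :
    (∀ z : Fin (n + 1) → ℂ, z ≠ 0 →
      ((∃ w ∈ SmCone m n, herm n z w = 0) ↔
        (Qt m n hmn.le z = 0 ∨ ∃ v ∈ Scone m, herm m (Qt m n hmn.le z) v = 0))) ∧
    {z : Fin (n + 1) → ℂ | z ≠ 0 ∧ ∃ w ∈ SmCone m n, herm n z w = 0} =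
      {z : Fin (n + 1) → ℂ | z ≠ 0 ∧ Qt m n hmn.le z = 0} ∪
      {z : Fin (n + 1) → ℂ | z ≠ 0 ∧ Qt m n hmn.le z ∈ LambdaCone m} ∧
    {z : Fin (n + 1) → ℂ | z ≠ 0 ∧ ∀ w ∈ SmCone m n, herm n z w ≠ 0} =
      {z : Fin (n + 1) → ℂ | z ≠ 0 ∧ Qt m n hmn.le z ≠ 0 ∧
        ∀ v ∈ Scone m, herm m (Qt m n hmn.le z) v ≠ 0} := by
  refine ⟨fun z _ => key_iff m n hm hmn.le z, ?_, ?_⟩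
  · ext z
    have hk := key_iff m n hm hmn.le z
    simp only [Set.mem_setOf_eq, Set.mem_union, LambdaCone]
    rw [hk]
    tauto
  · ext z
    have hk := not_congr (key_iff m n hm hmn.le z)
    push Not at hk
    simp only [Set.mem_setOf_eq]
    exact and_congr_right fun _ => hk
end

section
/- Let 2 < m ≤ n and let S_m = {w ∈ ℂ^{n+1} \ {0} : w real, w_{m+1} = ⋯ = w_n = 0, and ⟨w,w⟩ = 0}. Then the set Ω̃ = {z ∈ ℂ^{n+1} \ {0} : ⟨z,w⟩ ≠ 0 for every w ∈ S_m} is open in ℂ^{n+1} and is connected (in the subspace topology). -/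
open scoped ComplexConjugate

theorem exists_kernel_vec (n : ℕ) (hn : 3 ≤ n) (f : Fin n → ℂ) :
    ∃ k : Fin n → ℝ, 0 < ∑ j, k j ^ 2 ∧ (∀ j : Fin n, 3 ≤ (j : ℕ) → k j = 0) ∧
      ∑ j, f j * (k j : ℂ) = 0 := by
  obtain ⟨d, rfl⟩ := Nat.exists_eq_add_of_le hn
  have h := LinearMap.ker_ne_bot_of_finrank_lt
    (f := Fintype.linearCombination ℝ (fun i : Fin 3 => f (Fin.castAdd d i))) (by simp)
  obtain ⟨k, hk, hk0⟩ := (Submodule.ne_bot_iff _).1 h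
  rw [LinearMap.mem_ker, Fintype.linearCombination_apply] at hk
  refine ⟨Fin.append k 0, ?_, ?_, ?_⟩
  · rw [Fin.sum_univ_add]
    simp only [Fin.append_left, Fin.append_right]
    obtain ⟨i, hi⟩ := Function.ne_iff.1 hk0
    have : 0 < ∑ i, k i ^ 2 :=
      Finset.sum_pos' (fun i _ => sq_nonneg _) ⟨i, Finset.mem_univ _, by
        have : k i ≠ 0 := hi
        positivity⟩
    simpa using this
  · intro j hj
    induction j using Fin.addCases with
    | left i => simp at hj; omega
    | right i => simp
  · rw [Fin.sum_univ_add]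
    simp only [Fin.append_left, Fin.append_right]
    simp only [Complex.real_smul] at hk
    simpa [mul_comm] using hk

theorem herm_ofReal (n : ℕ) (z : Fin (n + 1) → ℂ) (u : Fin n → ℝ) (c : ℝ) :
    herm n z (Fin.snoc (α := fun _ => ℂ) (fun j => (u j : ℂ)) (c : ℂ)) =
      (∑ j, z j.castSucc * (u j : ℂ)) - z (Fin.last n) * c := by
  simp [herm]

theorem snoc_mem (m n : ℕ) (u : Fin n → ℝ) (c : ℝ) (hc : c ≠ 0)
    (hu : ∀ j : Fin n, m ≤ (j : ℕ) → u j = 0) (h : ∑ j, u j ^ 2 = c ^ 2) :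
    (Fin.snoc (α := fun _ => ℂ) (fun j => (u j : ℂ)) (c : ℂ) : Fin (n + 1) → ℂ) ∈ SmCone m n := by
  refine ⟨?_, ?_, ?_, ?_⟩
  · intro h0
    have := congrFun h0 (Fin.last n)
    simp at this
    exact hc this
  · funext j
    induction j using Fin.lastCases with
    | last => simp [conjVec]
    | cast j => simp [conjVec]
  · intro j hj hjn
    induction j using Fin.lastCases with
    | last => simp at hjn
    | cast j => simpa using hu j (by simpa using hj)
  · rw [herm_ofReal]
    simp only [Fin.snoc_castSucc, Fin.snoc_last]
    have : ((∑ j, u j ^ 2 : ℝ) : ℂ) = ((c ^ 2 : ℝ) : ℂ) := by rw [h]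
    push_cast at this
    simp only [← pow_two]
    rw [this, sub_self]

theorem mem_repr (m n : ℕ) (w : Fin (n + 1) → ℂ) (hw : w ∈ SmCone m n) :
    ∃ (u : Fin n → ℝ) (c : ℝ), c ≠ 0 ∧ (∀ j : Fin n, m ≤ (j : ℕ) → u j = 0) ∧
      ∑ j, u j ^ 2 = c ^ 2 ∧ w = Fin.snoc (α := fun _ => ℂ) (fun j => (u j : ℂ)) (c : ℂ) := by
  obtain ⟨h0, hr, hs, hh⟩ := hw
  have hre : ∀ j, ((w j).re : ℂ) = w j := fun j => Complex.conj_eq_iff_re.1 (congrFun hr j)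
  have hrep : w = Fin.snoc (α := fun _ => ℂ) (fun j => (((w j.castSucc).re : ℝ) : ℂ))
      (((w (Fin.last n)).re : ℝ) : ℂ) := by
    funext j
    induction j using Fin.lastCases with
    | last => simp [hre]
    | cast j => simp [hre]
  have hsum : ∑ j : Fin n, (w j.castSucc).re ^ 2 = (w (Fin.last n)).re ^ 2 := by
    have h1 := hh
    rw [hrep, herm_ofReal] at h1
    simp only [Fin.snoc_castSucc, Fin.snoc_last, ← pow_two] at h1
    exact_mod_cast sub_eq_zero.1 h1
  refine ⟨_, _, ?_, ?_, hsum, hrep⟩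
  · intro hc
    apply h0
    rw [hc] at hsum
    have h2 := (Finset.sum_eq_zero_iff_of_nonneg (fun j _ => sq_nonneg _)).1
      (hsum.trans (by norm_num))
    funext j
    rw [← hre j]
    induction j using Fin.lastCases with
    | last => simp [hc]
    | cast j => simpa using h2 j (Finset.mem_univ _)
  · intro j hj
    rw [hs j.castSucc (by simpa using hj) (by simp)]
    simp

theorem core (m n : ℕ) (hm : 2 < m) (hmn : m ≤ n) (z : Fin (n + 1) → ℂ)
    (hz : ∀ w ∈ SmCone m n, herm n z w ≠ 0) (u : Fin n → ℝ) (c : ℝ) (hc : c ≠ 0)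
    (hu : ∀ j : Fin n, m ≤ (j : ℕ) → u j = 0) (h : ∑ j, u j ^ 2 ≤ c ^ 2) :
    (∑ j, z j.castSucc * (u j : ℂ)) - z (Fin.last n) * c ≠ 0 := by
  obtain ⟨k, hk, hks, hk0⟩ := exists_kernel_vec n (by omega) (fun j => z j.castSucc)
  have hexp : ∀ a : ℝ, ∑ j, (u j + a * k j) ^ 2 =
      ∑ j, u j ^ 2 + 2 * a * ∑ j, u j * k j + a ^ 2 * ∑ j, k j ^ 2 := by
    intro a
    rw [Finset.mul_sum, Finset.mul_sum, ← Finset.sum_add_distrib, ← Finset.sum_add_distrib]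
    exact Finset.sum_congr rfl fun j _ => by ring
  obtain ⟨a, ha⟩ : ∃ a : ℝ, ∑ j, (u j + a * k j) ^ 2 = c ^ 2 := by
    simp only [hexp]
    generalize ∑ j, u j ^ 2 = A at *
    generalize ∑ j, u j * k j = B at *
    generalize ∑ j, k j ^ 2 = K at *
    have hD : 0 ≤ B ^ 2 + K * (c ^ 2 - A) := by nlinarith [sq_nonneg B, mul_nonneg hk.le (sub_nonneg.2 h)]
    refine ⟨(-B + Real.sqrt (B ^ 2 + K * (c ^ 2 - A))) / K, ?_⟩
    have := Real.sq_sqrt hD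
    field_simp
    linear_combination this
  intro hcon
  refine hz _ (snoc_mem m n (fun j => u j + a * k j) c hc ?_ ha) ?_
  · intro j hj
    simp [hu j hj, hks j (by omega)]
  · rw [herm_ofReal, ← hcon]
    congr 1
    have : ∑ j, z (Fin.castSucc j) * ((u j + a * k j : ℝ) : ℂ) =
        ∑ j, z (Fin.castSucc j) * (u j : ℂ) + a * ∑ j, z (Fin.castSucc j) * (k j : ℂ) := by
      rw [Finset.mul_sum, ← Finset.sum_add_distrib]
      exact Finset.sum_congr rfl fun j _ => by push_cast; ring
    rw [this, hk0]
    simp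

theorem last_ne_s19 (m n : ℕ) (hm : 2 < m) (hmn : m ≤ n) (z : Fin (n + 1) → ℂ)
    (hz : ∀ w ∈ SmCone m n, herm n z w ≠ 0) : z (Fin.last n) ≠ 0 := by
  have := core m n hm hmn z hz 0 1 one_ne_zero (by simp) (by simp)
  simpa using this

theorem shrink_mem (m n : ℕ) (hm : 2 < m) (hmn : m ≤ n) (z : Fin (n + 1) → ℂ)
    (hz : ∀ w ∈ SmCone m n, herm n z w ≠ 0) (s : ℝ) (hs : s ∈ Set.Icc (0 : ℝ) 1) :
    (Fin.snoc (α := fun _ => ℂ) (fun j => (s : ℂ) * z j.castSucc) (z (Fin.last n)) :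
      Fin (n + 1) → ℂ) ∈
      {z : Fin (n + 1) → ℂ | z ≠ 0 ∧ ∀ w ∈ SmCone m n, herm n z w ≠ 0} := by
  refine ⟨?_, ?_⟩
  · intro h0
    have := congrFun h0 (Fin.last n)
    simp at this
    exact last_ne_s19 m n hm hmn z hz this
  · intro w hw
    obtain ⟨u, c, hc, hu, hsum, rfl⟩ := mem_repr m n w hw
    have := core m n hm hmn z hz (fun j => s * u j) c hc (fun j hj => by simp [hu j hj]) (by
      simp only [mul_pow]
      rw [← Finset.mul_sum, hsum]
      have : s ^ 2 ≤ 1 := pow_le_one₀ hs.1 hs.2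
      nlinarith [sq_nonneg c])
    rw [herm_ofReal]
    simp only [Fin.snoc_castSucc, Fin.snoc_last]
    convert this using 3
    push_cast
    ring

theorem axis_mem (m n : ℕ) (t : ℂ) (ht : t ≠ 0) :
    (Fin.snoc (α := fun _ => ℂ) (fun _ => 0) t : Fin (n + 1) → ℂ) ∈
      {z : Fin (n + 1) → ℂ | z ≠ 0 ∧ ∀ w ∈ SmCone m n, herm n z w ≠ 0} := by
  refine ⟨?_, ?_⟩
  · intro h0
    have := congrFun h0 (Fin.last n)
    simp at this
    exact ht this
  · intro w hw
    obtain ⟨u, c, hc, hu, hsum, rfl⟩ := mem_repr m n w hw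
    rw [herm_ofReal]
    simp [ht, hc]

theorem continuous_snoc_aux {X : Type*} [TopologicalSpace X] (n : ℕ) (f : X → Fin n → ℂ) (g : X → ℂ)
    (hf : Continuous f) (hg : Continuous g) :
    Continuous (fun x => (Fin.snoc (α := fun _ => ℂ) (f x) (g x) : Fin (n + 1) → ℂ)) := by
  refine continuous_pi fun j => ?_
  induction j using Fin.lastCases with
  | last => simpa using hg
  | cast j => simpa [Function.comp_def] using (continuous_apply j).comp hf

theorem herm_continuous (n : ℕ) :
    Continuous (fun p : (Fin (n + 1) → ℂ) × (Fin (n + 1) → ℂ) => herm n p.1 p.2) := by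
  unfold herm
  have : Continuous (fun z : ℂ => conj z) := Complex.continuous_conj
  fun_prop

theorem omega_isOpen (m n : ℕ) (hm : 2 < m) (hmn : m ≤ n) :
    IsOpen {z : Fin (n + 1) → ℂ | z ≠ 0 ∧ ∀ w ∈ SmCone m n, herm n z w ≠ 0} := by
  have hK : IsCompact {u : Fin n → ℝ | (∀ j : Fin n, m ≤ (j : ℕ) → u j = 0) ∧
      ∑ j, u j ^ 2 = 1} := by
    refine (isCompact_univ_pi (fun _ : Fin n => isCompact_Icc (a := (-1 : ℝ)) (b := 1))).of_isClosed_subset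
      ?_ ?_
    · refine IsClosed.and ?_ ?_
      · simp only [Set.setOf_forall]
        exact isClosed_iInter fun j => isClosed_iInter fun _ =>
          isClosed_eq (continuous_apply j) continuous_const
      · exact isClosed_eq (by fun_prop) continuous_const
    · rintro u ⟨_, h⟩ j -
      have := Finset.single_le_sum (f := fun j => u j ^ 2) (fun j _ => sq_nonneg _)
        (Finset.mem_univ j)
      simp only [h] at this
      exact abs_le.1 ((sq_le_one_iff_abs_le_one _).1 this)
  rw [isOpen_iff_mem_nhds]
  rintro z ⟨h0, hz⟩
  have h1 : ∀ᶠ z' in nhds z, ∀ u ∈ {u : Fin n → ℝ | (∀ j : Fin n, m ≤ (j : ℕ) → u j = 0) ∧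
      ∑ j, u j ^ 2 = 1}, herm n z' (Fin.snoc (α := fun _ => ℂ) (fun j => (u j : ℂ)) ((1 : ℝ) : ℂ)) ≠ 0 := by
    refine hK.eventually_forall_of_forall_eventually fun u hu => ?_
    have hne := hz _ (snoc_mem m n u 1 one_ne_zero hu.1 (by rw [hu.2]; norm_num))
    have hcont : Continuous (fun p : (Fin (n + 1) → ℂ) × (Fin n → ℝ) =>
        herm n p.1 (Fin.snoc (α := fun _ => ℂ) (fun j => (p.2 j : ℂ)) ((1 : ℝ) : ℂ))) :=
      (herm_continuous n).comp (continuous_fst.prodMk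
        (continuous_snoc_aux n _ _ (by fun_prop) continuous_const))
    exact hcont.continuousAt.eventually_ne hne
  filter_upwards [h1, isOpen_ne.mem_nhds h0] with z' hz' h0'
  refine ⟨h0', fun w hw => ?_⟩
  obtain ⟨u, c, hc, hu, hsum, rfl⟩ := mem_repr m n w hw
  have := hz' (fun j => u j / c) ⟨fun j hj => by simp [hu j hj], by
    simp only [div_pow]
    rw [← Finset.sum_div, hsum]
    field_simp⟩
  intro hcon
  apply this
  rw [herm_ofReal] at hcon ⊢
  have hc' : (c : ℂ) ≠ 0 := by exact_mod_cast hc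
  have h2 : ∑ j, z' (Fin.castSucc j) * ((u j / c : ℝ) : ℂ) =
      (∑ j, z' (Fin.castSucc j) * (u j : ℂ)) / c := by
    rw [Finset.sum_div]
    exact Finset.sum_congr rfl fun j _ => by push_cast; ring
  rw [h2, sub_eq_zero.1 hcon]
  field_simp
  simp

/-- (Theorem 3 / `teo:tres` ii, cone version): for `2 < m ≤ n` the cone over the Kulkarni
discontinuity region is open and connected. -/
theorem omegaCone_connected (m n : ℕ) (hm : 2 < m) (hmn : m ≤ n) :
    IsOpen {z : Fin (n + 1) → ℂ | z ≠ 0 ∧ ∀ w ∈ SmCone m n, herm n z w ≠ 0} ∧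
    IsConnected {z : Fin (n + 1) → ℂ | z ≠ 0 ∧ ∀ w ∈ SmCone m n, herm n z w ≠ 0} := by
  refine ⟨omega_isOpen m n hm hmn, ?_⟩
  apply IsPathConnected.isConnected
  refine ⟨_, axis_mem m n 1 one_ne_zero, ?_⟩
  intro z hz
  have ht := last_ne_s19 m n hm hmn z hz.2
  have hC : IsPathConnected ({0}ᶜ : Set ℂ) :=
    isPathConnected_compl_singleton_of_one_lt_rank (by simp [Complex.rank_real_complex]) 0
  have hA : IsPathConnected (Set.image (fun t : ℂ => (Fin.snoc (α := fun _ => ℂ) (fun _ => 0) t :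
      Fin (n + 1) → ℂ)) ({0}ᶜ : Set ℂ)) :=
    hC.image (continuous_snoc_aux n _ _ continuous_const continuous_id)
  have h1 := (hA.joinedIn _ ⟨1, by simp, rfl⟩ _ ⟨z (Fin.last n), by simpa using ht, rfl⟩).mono
    (V := {z : Fin (n + 1) → ℂ | z ≠ 0 ∧ ∀ w ∈ SmCone m n, herm n z w ≠ 0}) (by
      rintro _ ⟨t, ht, rfl⟩
      exact axis_mem m n t (by simpa using ht))
  refine h1.trans ?_
  refine JoinedIn.ofLine (f := fun s : ℝ => (Fin.snoc (α := fun _ => ℂ)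
    (fun j => (s : ℂ) * z j.castSucc) (z (Fin.last n)) : Fin (n + 1) → ℂ)) ?_ ?_ ?_ ?_
  · exact (continuous_snoc_aux n _ _ (by fun_prop) continuous_const).continuousOn
  · simp
  · funext j
    induction j using Fin.lastCases with
    | last => simp
    | cast j => simp
  · rintro _ ⟨s, hs, rfl⟩
    exact shrink_mem m n hm hmn z hz.2 s hs
end
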